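/- arXiv:2111.09923 — 6 statements merged into one kernel-verified Lean document; each statement's English description precedes it below -/
import Mathlib

section
/- Let n ≥ 3 be an odd integer. There exists ρ > 0 depending only on n such that: for every real-split central division ℚ-algebra A of degree n, every order 𝒪 ⊆ A, every z ∈ GL_n(ℝ), and every γ ∈ 𝒪 with nr(γ) = 1, if there exists k ∈ SO(n) such that every entry of z⁻¹(ι γ)z − k has absolute value less than ρ, then γ = 1. -/
open Matrix

/-- `IsSO k` : `k ∈ SO(n)`. -/
def IsSO {n : ℕ} (k : Matrix (Fin n) (Fin n) ℝ) : Prop :=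
  kᵀ * k = 1 ∧ k.det = 1

/-- An order in a `ℚ`-algebra: a subring which is finitely generated as a `ℤ`-module and
contains a `ℚ`-basis of the algebra. -/
def IsOrder (A : Type*) [Ring A] [Algebra ℚ A] (O : Subring A) : Prop :=
  O.toAddSubgroup.FG ∧ Submodule.span ℚ (O : Set A) = ⊤

/-!
If `k ∈ SO(n)` and `n` is odd, then `kᵀ (k - 1) = -(k - 1)ᵀ` gives `det (k - 1) = 0`, so by
compactness of `SO(n)` every `g` close enough to `SO(n)` satisfies `|det (g - 1)| < 1`.
On the other hand `ι` sends a `ℚ`-basis of `A` to an `ℝ`-basis of `M_n(ℝ)`, whence `det (ι x) ^ n`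
is the norm of `x` from `A` to `ℚ`. For integral `x ≠ 0` this is a nonzero integer, so
`|det (ι x)| ≥ 1`.
As `det (ι γ - 1)` is invariant under conjugation by `z`, taking `x = γ - 1` forces `γ = 1`.
-/

section CentralSimple

open MulOpposite
open scoped TensorProduct

variable {K A : Type*} [CommRing K] [Ring A] [Algebra K A]

section Enveloping

attribute [local instance] instModuleTensorProductMop

theorem tmul_mop_smul (a : A) (b : Aᵐᵒᵖ) (x : A) : (a ⊗ₜ[K] b) • x = a * x * b.unop :=
  AlgHom.mulLeftRight_apply K A a b x

theorem isSimpleModule_tensorProduct_mop [IsSimpleRing A] : IsSimpleModule (A ⊗[K] Aᵐᵒᵖ) A := by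
  obtain ⟨_, eq_bot_or_eq_top⟩ := isSimpleRing_iff_isTwoSided_imp.mp ‹IsSimpleRing A›
  rw [isSimpleModule_iff, isSimpleOrder_iff]
  refine ⟨inferInstance, fun N => ?_⟩
  let I : Ideal A :=
    { N with
      smul_mem' := fun a x hx => by
        simpa [tmul_mop_smul] using N.smul_mem (a ⊗ₜ[K] op 1) hx }
  have hI : I.IsTwoSided :=
    ⟨fun {x} b hx => show x * b ∈ N by
      simpa [tmul_mop_smul] using N.smul_mem ((1 : A) ⊗ₜ[K] op b) hx⟩
  refine (eq_bot_or_eq_top I hI).imp (fun h => ?_) (fun h => ?_) <;>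
    exact SetLike.coe_injective (congrArg (fun J : Ideal A => (J : Set A)) h)

theorem exists_smul_eq_of_end_tensorProduct_mop [Algebra.IsCentral K A]
    (g : Module.End (A ⊗[K] Aᵐᵒᵖ) A) : ∃ c : K, ∀ x, g x = c • x := by
  have apply_eq_mul (x : A) : g x = x * g 1 := by
    simpa only [tmul_mop_smul, unop_op, mul_one] using g.map_smul (x ⊗ₜ[K] op 1) 1
  have apply_eq_mul' (x : A) : g x = g 1 * x := by
    simpa only [tmul_mop_smul, unop_op, one_mul] using g.map_smul ((1 : A) ⊗ₜ[K] op x) 1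
  have central : g 1 ∈ Subalgebra.center K A :=
    Subalgebra.mem_center_iff.mpr fun x => by rw [← apply_eq_mul, apply_eq_mul']
  obtain ⟨c, hc⟩ := (Algebra.IsCentral.mem_center_iff K).mp central
  exact ⟨c, fun x => by rw [apply_eq_mul', hc, Algebra.smul_def]⟩

theorem exists_mulLeftRight_eqOn [IsSimpleRing A] [Algebra.IsCentral K A]
    (T : Module.End K A) (s : Finset A) :
    ∃ r : A ⊗[K] Aᵐᵒᵖ, ∀ x ∈ s, AlgHom.mulLeftRight K A r x = T x := by
  have := isSimpleModule_tensorProduct_mop (K := K) (A := A)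
  let T' : Module.End (Module.End (A ⊗[K] Aᵐᵒᵖ) A) A :=
    { T with
      map_smul' := fun g x => by
        obtain ⟨c, hc⟩ := exists_smul_eq_of_end_tensorProduct_mop g
        simp [hc] }
  obtain ⟨r, hr⟩ := jacobson_density T' s
  exact ⟨r, fun x hx => (hr x hx).symm⟩

end Enveloping

theorem exists_linearMap_apply_algHom {L B : Type*} [CommRing L] [Ring B] [Algebra K B]
    [Algebra L B] (f : A →ₐ[K] B) (r : A ⊗[K] Aᵐᵒᵖ) :
    ∃ Φ : B →ₗ[L] B, ∀ x, Φ (f x) = f (AlgHom.mulLeftRight K A r x) := by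
  induction r with
  | zero => exact ⟨0, by simp⟩
  | tmul a b => exact ⟨LinearMap.mulLeftRight L (f a, f b.unop), by simp⟩
  | add r₁ r₂ ih₁ ih₂ =>
    obtain ⟨Φ₁, h₁⟩ := ih₁
    obtain ⟨Φ₂, h₂⟩ := ih₂
    exact ⟨Φ₁ + Φ₂, by simp [h₁, h₂]⟩

end CentralSimple

theorem exists_dual_apply_eq_ite {K V ι : Type*} [Field K] [AddCommGroup V] [Module K V]
    [DecidableEq ι] {v : ι → V} (hv : LinearIndependent K v) (i : ι) :
    ∃ φ : Module.Dual K V, ∀ j, φ (v j) = if j = i then 1 else 0 := by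
  obtain ⟨φ, hφ⟩ := LinearMap.exists_extend (Finsupp.lapply i ∘ₗ hv.repr)
  refine ⟨φ, fun j => ?_⟩
  have φ_apply := LinearMap.congr_fun hφ ⟨v j, Submodule.subset_span ⟨j, rfl⟩⟩
  simpa [hv.repr_eq_single j, Finsupp.single_apply] using φ_apply

/- Two-sided multiplications extend from `A` to `B`, and by density they realise the coordinate
functionals of `v`. -/
theorem linearIndependent_algHom_comp {K L A B ι : Type*} [Field K] [CommRing L] [Ring A] [Ring B]
    [Algebra K A] [Algebra K B] [Algebra L B] [IsSimpleRing A] [Algebra.IsCentral K A]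
    [FaithfulSMul L B] {v : ι → A} (hv : LinearIndependent K v) (f : A →ₐ[K] B) :
    LinearIndependent L (f ∘ v) := by
  classical
  rw [linearIndependent_iff']
  intro s g hg i hi
  obtain ⟨φ, hφ⟩ := exists_dual_apply_eq_ite hv i
  obtain ⟨r, hr⟩ := exists_mulLeftRight_eqOn (φ.smulRight (1 : A)) (s.image v)
  obtain ⟨Φ, hΦ⟩ := exists_linearMap_apply_algHom (L := L) f r
  have Φ_apply (j) (hj : j ∈ s) : Φ (f (v j)) = if j = i then 1 else 0 := by
    rw [hΦ, hr _ (Finset.mem_image_of_mem v hj), LinearMap.smulRight_apply, hφ]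
    split_ifs <;> simp
  have g_smul_one : g i • (1 : B) = 0 := calc
    g i • (1 : B) = ∑ j ∈ s, g j • Φ (f (v j)) := by
      rw [Finset.sum_eq_single_of_mem i hi fun j hj hji => by simp [Φ_apply j hj, hji]]
      simp [Φ_apply i hi]
    _ = Φ (∑ j ∈ s, g j • f (v j)) := by simp
    _ = 0 := by rw [show ∑ j ∈ s, g j • f (v j) = 0 from hg, map_zero]
  exact (FaithfulSMul.algebraMap_injective L B)
    (by rw [Algebra.algebraMap_eq_smul_one, g_smul_one, map_zero])

section Norm

theorem norm_algHom_of_basis {K L A B ι : Type*} [Finite ι] [CommRing K] [CommRing L]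
    [Ring A] [Ring B] [Algebra K L] [Algebra K A] [Algebra K B] [Algebra L B]
    [IsScalarTower K L B] (f : A →ₐ[K] B) (b : Module.Basis ι K A) (b' : Module.Basis ι L B)
    (h : ∀ i, b' i = f (b i)) (x : A) :
    Algebra.norm L (f x) = algebraMap K L (Algebra.norm K x) := by
  classical
  have := Fintype.ofFinite ι
  have repr_apply (y : A) (i : ι) : b'.repr (f y) i = algebraMap K L (b.repr y i) := by
    have expand : f y = ∑ j, algebraMap K L (b.repr y j) • b' j := by
      conv_lhs => rw [← b.sum_repr y]
      simp only [map_sum, map_smul, algebraMap_smul, h]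
    rw [expand, b'.repr_sum_self]
  rw [Algebra.norm_eq_matrix_det b', Algebra.norm_eq_matrix_det b, RingHom.map_det]
  congr 1
  ext i j
  simp [Algebra.leftMulMatrix_eq_repr_mul, h, ← map_mul, repr_apply]

theorem norm_algHom_eq_of_isCentral {K L A B : Type*} [Field K] [Field L] [Ring A] [Ring B]
    [Algebra K L] [Algebra K A] [Algebra K B] [Algebra L B] [IsScalarTower K L B]
    [IsSimpleRing A] [Algebra.IsCentral K A] [Module.Finite K A] [Nontrivial B]
    (f : A →ₐ[K] B) (hdim : Module.finrank K A = Module.finrank L B) (x : A) :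
    Algebra.norm L (f x) = algebraMap K L (Algebra.norm K x) := by
  let b := Module.finBasis K A
  have : Nonempty (Fin (Module.finrank K A)) := b.index_nonempty
  exact norm_algHom_of_basis f b
    (basisOfLinearIndependentOfCardEqFinrank (linearIndependent_algHom_comp b.linearIndependent f)
      (by rw [Fintype.card_fin, hdim])) (by simp) x

variable {m : Type*} [Fintype m] [DecidableEq m]

theorem norm_matrix_eq_det_pow {R : Type*} [CommRing R] (X : Matrix m m R) :
    Algebra.norm R X = X.det ^ Fintype.card m := by
  let e : Matrix m m R ≃ₗ[R] m → m → R := transposeLinearEquiv m m R R ≪≫ₗ (ofLinearEquiv R).symm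
  have conj_lmul : e.conj (Algebra.lmul R _ X) =
      LinearMap.pi fun i => (toLin' X) ∘ₗ LinearMap.proj i := by
    refine LinearMap.ext fun M => funext fun i => funext fun j => ?_
    simp [e, LinearEquiv.conj_apply, mul_apply, mulVec, dotProduct, mul_comm]
  rw [Algebra.norm_apply, ← LinearMap.det_conj _ e, ← LinearMap.comp_assoc,
    ← LinearEquiv.conj_apply, conj_lmul, LinearMap.det_pi]
  simp

theorem isIntegral_det_of_isIntegral {R K : Type*} [CommRing R] [Field K] [Algebra R K]
    {X : Matrix m m K} (hX : IsIntegral R X) : IsIntegral R X.det := by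
  let φ : K →ₐ[R] AlgebraicClosure K := IsScalarTower.toAlgHom R K (AlgebraicClosure K)
  obtain ⟨p, hp, hpX⟩ := hX.map φ.mapMatrix
  rw [← isIntegral_algHom_iff φ φ.injective, AlgHom.map_det, det_eq_prod_roots_charpoly]
  refine IsIntegral.multiset_prod fun μ hμ => ⟨p, hp, ?_⟩
  have hμX : μ ∈ spectrum _ (φ.mapMatrix X) :=
    mem_spectrum_iff_isRoot_charpoly.mpr (Polynomial.isRoot_of_mem_roots hμ)
  have eval_mem := spectrum.subset_polynomial_aeval _ (p.map (algebraMap R _)) ⟨μ, hμX, rfl⟩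
  rw [Polynomial.aeval_map_algebraMap, Polynomial.aeval_def, hpX] at eval_mem
  rcases isEmpty_or_nonempty m with _ | _
  · exact (spectrum.of_subsingleton (R := AlgebraicClosure K) (φ.mapMatrix X) ▸ hμX).elim
  · simpa [spectrum.zero_eq, Polynomial.eval_map] using eval_mem

end Norm

section Rational

variable {m : Type*} [Fintype m] [DecidableEq m]
  {A : Type*} [DivisionRing A] [CharZero A] [Algebra.IsCentral ℚ A]

theorem exists_intCast_eq_det_pow [Nonempty m] (f : A →ₐ[ℚ] Matrix m m ℝ)
    (hdim : Module.finrank ℚ A = Fintype.card m ^ 2) {x : A} (hx : IsIntegral ℤ x) :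
    ∃ a : ℤ, (a : ℝ) = (f x).det ^ Fintype.card m := by
  have : Module.Finite ℚ A := Module.finite_of_finrank_pos (by rw [hdim]; positivity)
  have hdim' : Module.finrank ℚ A = Module.finrank ℝ (Matrix m m ℝ) := by
    rw [hdim, Module.finrank_matrix, Module.finrank_self, mul_one, sq]
  have det_pow : algebraMap ℚ ℝ (Algebra.norm ℚ x) = (f x).det ^ Fintype.card m := by
    rw [← norm_algHom_eq_of_isCentral f hdim', norm_matrix_eq_det_pow]
  have integral : IsIntegral ℤ (Algebra.norm ℚ x) := by
    rw [← isIntegral_algebraMap_iff (algebraMap ℚ ℝ).injective, det_pow]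
    exact (isIntegral_det_of_isIntegral (hx.map (f.restrictScalars ℤ))).pow _
  obtain ⟨a, ha⟩ := IsIntegrallyClosed.isIntegral_iff.mp integral
  exact ⟨a, by simp [← det_pow, ← ha]⟩

theorem one_le_abs_det_of_isIntegral [Nonempty m] (f : A →ₐ[ℚ] Matrix m m ℝ)
    (hdim : Module.finrank ℚ A = Fintype.card m ^ 2) {x : A} (hx : IsIntegral ℤ x) (hx₀ : x ≠ 0) :
    1 ≤ |(f x).det| := by
  obtain ⟨a, ha⟩ := exists_intCast_eq_det_pow f hdim hx
  have ha₀ : a ≠ 0 := by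
    rw [← Int.cast_ne_zero (α := ℝ), ha]
    exact pow_ne_zero _ ((isUnit_iff_isUnit_det _).mp ((IsUnit.mk0 x hx₀).map f)).ne_zero
  rw [← one_le_pow_iff_of_nonneg (abs_nonneg _) (Fintype.card_ne_zero (α := m)), ← abs_pow, ← ha]
  exact_mod_cast Int.one_le_abs ha₀

end Rational

section Orthogonal

open scoped Matrix.Norms.Elementwise

theorem isCompact_unitaryGroup (m 𝕜 : Type*) [Fintype m] [DecidableEq m] [RCLike 𝕜] :
    IsCompact (unitaryGroup m 𝕜 : Set (Matrix m m 𝕜)) := by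
  have := FiniteDimensional.proper_rclike 𝕜 (Matrix m m 𝕜)
  refine Metric.isCompact_of_isClosed_isBounded ?_ ?_
  · have setOf_star_mul_self : (unitaryGroup m 𝕜 : Set (Matrix m m 𝕜)) = {U | star U * U = 1} :=
      Set.ext fun _ => mem_unitaryGroup_iff'
    rw [setOf_star_mul_self]
    exact isClosed_eq (by fun_prop) continuous_const
  · exact isBounded_iff_forall_norm_le.mpr ⟨1, fun U hU => entrywise_sup_norm_bound_of_unitary hU⟩

theorem det_sub_one_eq_zero_of_transpose_mul_self {m R : Type*} [Fintype m] [DecidableEq m]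
    [CommRing R] [IsAddTorsionFree R] (hm : Odd (Fintype.card m)) {k : Matrix m m R}
    (hk : kᵀ * k = 1) (hdet : k.det = 1) : (k - 1).det = 0 := by
  have transpose_mul_sub_one : kᵀ * (k - 1) = -(k - 1)ᵀ := by
    rw [mul_sub, hk, mul_one, transpose_sub, transpose_one, neg_sub]
  have det_eq := congrArg det transpose_mul_sub_one
  rwa [det_mul, det_transpose, hdet, one_mul, det_neg, det_transpose, hm.neg_one_pow, neg_one_mul,
    self_eq_neg] at det_eq

theorem isCompact_setOf_isSO (n : ℕ) : IsCompact {k : Matrix (Fin n) (Fin n) ℝ | IsSO k} := by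
  have setOf_isSO : {k : Matrix (Fin n) (Fin n) ℝ | IsSO k} =
      (unitaryGroup (Fin n) ℝ : Set (Matrix (Fin n) (Fin n) ℝ)) ∩ {k | k.det = 1} := by
    ext k
    exact and_congr_left fun _ => mem_unitaryGroup_iff'.symm
  rw [setOf_isSO]
  exact (isCompact_unitaryGroup _ _).inter_right (isClosed_eq (by fun_prop) continuous_const)

theorem exists_pos_forall_abs_det_sub_one_lt_one {n : ℕ} (hn : Odd n) :
    ∃ ρ : ℝ, 0 < ρ ∧ ∀ g k : Matrix (Fin n) (Fin n) ℝ, IsSO k →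
      (∀ i j, |(g - k) i j| < ρ) → |(g - 1).det| < 1 := by
  let U : Set (Matrix (Fin n) (Fin n) ℝ) := {g | |(g - 1).det| < 1}
  have isOpen_U : IsOpen U := isOpen_lt (by fun_prop) continuous_const
  have isSO_subset_U : {k | IsSO k} ⊆ U := fun k hk => by
    simp [U, det_sub_one_eq_zero_of_transpose_mul_self (by simpa using hn) hk.1 hk.2]
  obtain ⟨ρ, hρ, thickening_subset⟩ :=
    (isCompact_setOf_isSO n).exists_thickening_subset_open isOpen_U isSO_subset_U
  refine ⟨ρ, hρ, fun g k hk hgk => thickening_subset (Metric.mem_thickening_iff.mpr ⟨k, hk, ?_⟩)⟩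
  rwa [dist_eq_norm, norm_lt_iff hρ]

end Orthogonal

theorem isIntegral_of_mem_of_isOrder {A : Type*} [Ring A] [Algebra ℚ A] {O : Subring A}
    (hO : IsOrder A O) {x : A} (hx : x ∈ O) : IsIntegral ℤ x :=
  IsIntegral.of_mem_of_fg (subalgebraOfSubring O)
    ((Submodule.fg_iff_addSubgroup_fg _).mpr hO.1) x hx

theorem stmt3_general (n : ℕ) (hn : Odd n) :
    ∃ ρ : ℝ, 0 < ρ ∧
      ∀ (A : Type*) [DivisionRing A] [CharZero A] [Algebra.IsCentral ℚ A]
        (ι : A →ₐ[ℚ] Matrix (Fin n) (Fin n) ℝ),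
        Module.finrank ℚ A = n ^ 2 →
        ∀ (z : GL (Fin n) ℝ) (γ : A), IsIntegral ℤ γ →
        (∃ k : Matrix (Fin n) (Fin n) ℝ, IsSO k ∧
          ∀ i j, |((↑z⁻¹ : Matrix (Fin n) (Fin n) ℝ) * ι γ * z.val - k) i j| < ρ) →
        γ = 1 := by
  obtain ⟨ρ, hρ, det_lt_one⟩ := exists_pos_forall_abs_det_sub_one_lt_one hn
  refine ⟨ρ, hρ, fun A _ _ _ ι hdim z γ hγ ⟨k, hk, hgk⟩ => ?_⟩
  have : Nonempty (Fin n) := Fin.pos_iff_nonempty.mp hn.pos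
  have conj_sub_one : (z⁻¹).val * ι γ * z.val - 1 = (z⁻¹).val * ι (γ - 1) * z.val := by
    simp [mul_sub, sub_mul]
  have det_conj : ((z⁻¹).val * ι γ * z.val - 1).det = (ι (γ - 1)).det := by
    rw [conj_sub_one, coe_units_inv, det_conj' z.isUnit]
  have hγ' : IsIntegral ℤ (γ - 1) :=
    .of_mem_of_fg _ hγ.fg_adjoin_singleton _
      (sub_mem (Algebra.self_mem_adjoin_singleton ℤ γ) (one_mem _))
  by_contra hne
  have one_le := one_le_abs_det_of_isIntegral ι (by simpa using hdim) hγ'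
    (sub_ne_zero.mpr hne)
  exact one_le.not_gt (det_conj ▸ det_lt_one _ k hk hgk)

/-- For odd `n ≥ 3` there is `ρ > 0`, depending only on `n`, such that for
every real-split central division `ℚ`-algebra `A` of degree `n`, every order `𝒪 ⊆ A`, every
`z ∈ GL_n(ℝ)` and every `γ ∈ 𝒪` with `nr γ = 1`: if some `k ∈ SO(n)` satisfies that every
entry of `z⁻¹ (ι γ) z - k` has absolute value `< ρ`, then `γ = 1`. -/
theorem stmt3 (n : ℕ) (hn : 3 ≤ n) (hodd : Odd n) :
    ∃ ρ : ℝ, 0 < ρ ∧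
      ∀ (A : Type) [DivisionRing A] [CharZero A]
        (ι : A →ₐ[ℚ] Matrix (Fin n) (Fin n) ℝ),
        Function.Injective ι →
        Subalgebra.center ℚ A = ⊥ →
        Module.finrank ℚ A = n ^ 2 →
        ∀ O : Subring A, IsOrder A O →
        ∀ (z : Matrix.GeneralLinearGroup (Fin n) ℝ) (γ : A), γ ∈ O → (ι γ).det = 1 →
        (∃ k : Matrix (Fin n) (Fin n) ℝ, IsSO k ∧
          ∀ i j, |(((↑z⁻¹ : Matrix (Fin n) (Fin n) ℝ) * ι γ *
              (↑z : Matrix (Fin n) (Fin n) ℝ) - k)) i j| < ρ) →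
        γ = 1 := by
  obtain ⟨ρ, hρ, H⟩ := stmt3_general n hodd
  refine ⟨ρ, hρ, fun A _ _ ι _ hc hdim O hO z γ hγ _ h => ?_⟩
  have : Algebra.IsCentral ℚ A := ⟨hc.le⟩
  exact H A ι hdim z γ (isIntegral_of_mem_of_isOrder hO hγ) h
end

section
/- Let n be an odd positive integer and let A, B ∈ SO(n). Then the commutator AB − BA is a singular matrix: det(AB − BA) = 0. -/
open Matrix

/-!
If `U` and `V` are orthogonal, then `Uᵀ (U - V) Vᵀ = -(U - V)ᵀ`. When moreover `det U = det V`,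
the outer factors contribute `(det U)² = 1` to the determinant, so in odd dimension
`det (U - V) = -det (U - V)`. The products `A B` and `B A` are such a pair.
-/

section Orthogonal

variable {ι R : Type*} [Fintype ι] [DecidableEq ι] [CommRing R]

lemma transpose_mul_sub_mul_transpose {U V : Matrix ι ι R}
    (hU : U ∈ orthogonalGroup ι R) (hV : V ∈ orthogonalGroup ι R) :
    Uᵀ * (U - V) * Vᵀ = -(U - V)ᵀ := by
  have hUU : Uᵀ * U = 1 := (mem_orthogonalGroup_iff' ι R).mp hU
  have hVV : V * Vᵀ = 1 := (mem_orthogonalGroup_iff ι R).mp hV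
  calc Uᵀ * (U - V) * Vᵀ = (Uᵀ * U) * Vᵀ - Uᵀ * (V * Vᵀ) := by noncomm_ring
    _ = Vᵀ - Uᵀ := by rw [hUU, hVV, one_mul, mul_one]
    _ = -(U - V)ᵀ := by rw [transpose_sub, neg_sub]

lemma det_mul_self_of_mem_orthogonalGroup {U : Matrix ι ι R} (hU : U ∈ orthogonalGroup ι R) :
    U.det * U.det = 1 := by
  have hUU : U * Uᵀ = 1 := (mem_orthogonalGroup_iff ι R).mp hU
  simpa using congrArg det hUU

lemma det_sub_eq_neg_of_mem_orthogonalGroup (hι : Odd (Fintype.card ι)) {U V : Matrix ι ι R}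
    (hU : U ∈ orthogonalGroup ι R) (hV : V ∈ orthogonalGroup ι R) (hdet : U.det = V.det) :
    (U - V).det = -(U - V).det :=
  calc (U - V).det = U.det * U.det * (U - V).det := by
        rw [det_mul_self_of_mem_orthogonalGroup hU, one_mul]
    _ = (Uᵀ * (U - V) * Vᵀ).det := by
        rw [det_mul, det_mul, det_transpose, det_transpose, ← hdet, mul_right_comm]
    _ = -(U - V).det := by
        rw [transpose_mul_sub_mul_transpose hU hV, det_neg, hι.neg_one_pow, det_transpose,
          neg_one_mul]

theorem stmt5_general (h2 : IsRegular (2 : R)) (hι : Odd (Fintype.card ι)) {A B : Matrix ι ι R}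
    (hA : A ∈ orthogonalGroup ι R) (hB : B ∈ orthogonalGroup ι R) :
    (A * B - B * A).det = 0 := by
  have hself : (A * B - B * A).det = -(A * B - B * A).det :=
    det_sub_eq_neg_of_mem_orthogonalGroup hι (mul_mem hA hB) (mul_mem hB hA) (det_mul_comm A B)
  refine h2.left.mul_left_eq_zero_iff.mp ?_
  rw [two_mul, ← eq_neg_iff_add_eq_zero, ← hself]

end Orthogonal

/-- For odd `n` and `A, B ∈ SO(n)` the commutator `AB - BA` is singular. -/
theorem stmt5 (n : ℕ) (hn : 0 < n) (hodd : Odd n)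
    (A B : Matrix (Fin n) (Fin n) ℝ) (hA : IsSO A) (hB : IsSO B) :
    (A * B - B * A).det = 0 :=
  stmt5_general (.of_ne_zero two_ne_zero) (by rwa [Fintype.card_fin])
    ((mem_orthogonalGroup_iff' _ _).mpr hA.1) ((mem_orthogonalGroup_iff' _ _).mpr hB.1)
end

section
/- Let n ≥ 3 be an odd integer. There exists a constant C > 0 depending only on n such that: for every z ∈ GL_n(ℝ), every δ ∈ (0,1], and all g₁, g₂ ∈ GL_n(ℝ) with det g₁ > 0 and det g₂ > 0, if for each i ∈ {1,2} there exists kᵢ ∈ SO(n) such that every entry of (det gᵢ)^{-1/n} · z⁻¹ gᵢ z − kᵢ has absolute value at most δ, then |det(g₁g₂ − g₂g₁)| ≤ C · δ · (det g₁) · (det g₂). -/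
open Matrix

/-!
If `k₁, k₂` are orthogonal of odd size, then `A = k₁k₂` and `B = k₂k₁` are orthogonal with equal
determinants, and `A - B = A (B - A)ᵀ B` forces `det (A - B) = -det (A - B)`, so `k₁k₂ - k₂k₁` is
singular. The polynomial `(A, B) ↦ det (AB - BA)` is Lipschitz on bounded sets and the orthogonal
group is bounded, so its value at pairs `δ`-close to orthogonal ones is `O(δ)`. Finally,
conjugation does not change `det (g₁g₂ - g₂g₁)`, and rescaling each `gᵢ` by `|det gᵢ|^{-1/n}`
divides it by `|det g₁| |det g₂|`.
-/

section Algebra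

variable {ι R : Type*} [Fintype ι] [DecidableEq ι] [CommRing R]

lemma det_sub_eq_zero_of_mem_orthogonalGroup [IsAddTorsionFree R] (hodd : Odd (Fintype.card ι))
    {A B : Matrix ι ι R} (hA : A ∈ orthogonalGroup ι R) (hB : B ∈ orthogonalGroup ι R)
    (hdet : A.det * B.det = 1) : (A - B).det = 0 := by
  have hfactor : A - B = A * (-(A - B))ᵀ * B := by
    rw [neg_sub, transpose_sub, Matrix.mul_sub, Matrix.sub_mul, (mem_orthogonalGroup_iff ι R).mp hA,
      Matrix.mul_assoc, (mem_orthogonalGroup_iff' ι R).mp hB, Matrix.mul_one, Matrix.one_mul]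
  refine self_eq_neg.mp ?_
  calc (A - B).det = (A * (-(A - B))ᵀ * B).det := congrArg det hfactor
    _ = A.det * B.det * -(A - B).det := by
      rw [det_mul, det_mul, det_transpose, det_neg, hodd.neg_one_pow]
      ring
    _ = -(A - B).det := by rw [hdet, one_mul]

lemma det_mul_self_eq_one_of_mem_orthogonalGroup {A : Matrix ι ι R}
    (hA : A ∈ orthogonalGroup ι R) : A.det * A.det = 1 := by
  simpa only [det_mul, det_transpose, det_one] using
    congrArg det ((mem_orthogonalGroup_iff ι R).mp hA)

lemma det_mul_sub_mul_eq_zero_of_mem_orthogonalGroup [IsAddTorsionFree R]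
    (hodd : Odd (Fintype.card ι)) {A B : Matrix ι ι R} (hA : A ∈ orthogonalGroup ι R)
    (hB : B ∈ orthogonalGroup ι R) : (A * B - B * A).det = 0 := by
  refine det_sub_eq_zero_of_mem_orthogonalGroup hodd (mul_mem hA hB) (mul_mem hB hA) ?_
  calc (A * B).det * (B * A).det = (A.det * A.det) * (B.det * B.det) := by
        rw [det_mul, det_mul]
        ring
    _ = 1 := by
      rw [det_mul_self_eq_one_of_mem_orthogonalGroup hA,
        det_mul_self_eq_one_of_mem_orthogonalGroup hB, one_mul]

lemma det_smul_conj_mul_sub_mul (z : GL ι R) (a b : R) (A B : Matrix ι ι R) :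
    ((a • (z⁻¹.val * A * z.val)) * (b • (z⁻¹.val * B * z.val)) -
        (b • (z⁻¹.val * B * z.val)) * (a • (z⁻¹.val * A * z.val))).det =
      a ^ Fintype.card ι * b ^ Fintype.card ι * (A * B - B * A).det := by
  have conj_mul (X Y : Matrix ι ι R) :
      (z⁻¹.val * X * z.val) * (z⁻¹.val * Y * z.val) = z⁻¹.val * (X * Y) * z.val := by
    simp only [mul_assoc, Units.mul_inv_cancel_left]
  rw [smul_mul_smul_comm, smul_mul_smul_comm, conj_mul, conj_mul, mul_comm b a, ← smul_sub,
    ← Matrix.sub_mul, ← Matrix.mul_sub, det_smul, det_units_conj', mul_pow]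

end Algebra

section Perturbation

open scoped Matrix.Norms.Elementwise

variable {ι : Type*} [Fintype ι] [DecidableEq ι]

lemma contDiff_det_mul_sub_mul {𝕜 : Type*} [NontriviallyNormedField 𝕜] {m : WithTop ℕ∞} :
    ContDiff 𝕜 m fun p : Matrix ι ι 𝕜 × Matrix ι ι 𝕜 ↦ (p.1 * p.2 - p.2 * p.1).det := by
  simp only [det_apply', Matrix.sub_apply, mul_apply]
  fun_prop

lemma exists_lipschitzOnWith_det_mul_sub_mul (r : ℝ) :
    ∃ K, LipschitzOnWith K (fun p : Matrix ι ι ℝ × Matrix ι ι ℝ ↦ (p.1 * p.2 - p.2 * p.1).det)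
      (Metric.closedBall 0 r) :=
  (contDiff_det_mul_sub_mul (m := 1)).contDiffOn.exists_lipschitzOnWith one_ne_zero
    (convex_closedBall 0 r) (isCompact_closedBall 0 r)

lemma exists_abs_det_mul_sub_mul_le (hodd : Odd (Fintype.card ι)) :
    ∃ C : ℝ, 0 < C ∧ ∀ δ ≤ 1, ∀ h₁ h₂ : Matrix ι ι ℝ, ∀ k₁ ∈ orthogonalGroup ι ℝ,
      ∀ k₂ ∈ orthogonalGroup ι ℝ, ‖h₁ - k₁‖ ≤ δ → ‖h₂ - k₂‖ ≤ δ →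
      |(h₁ * h₂ - h₂ * h₁).det| ≤ C * δ := by
  obtain ⟨K, hK⟩ := exists_lipschitzOnWith_det_mul_sub_mul (ι := ι) 2
  refine ⟨K + 1, by positivity, fun δ hδ h₁ h₂ k₁ hk₁ k₂ hk₂ hclose₁ hclose₂ ↦ ?_⟩
  have hk₁_norm : ‖k₁‖ ≤ 1 := entrywise_sup_norm_bound_of_unitary hk₁
  have hk₂_norm : ‖k₂‖ ≤ 1 := entrywise_sup_norm_bound_of_unitary hk₂
  have hh₁_norm : ‖h₁‖ ≤ 2 := by linarith [norm_sub_norm_le h₁ k₁]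
  have hh₂_norm : ‖h₂‖ ≤ 2 := by linarith [norm_sub_norm_le h₂ k₂]
  have hh_mem : (h₁, h₂) ∈ Metric.closedBall 0 2 :=
    mem_closedBall_zero_iff.mpr (norm_prod_le_iff.mpr ⟨hh₁_norm, hh₂_norm⟩)
  have hk_mem : (k₁, k₂) ∈ Metric.closedBall 0 2 :=
    mem_closedBall_zero_iff.mpr
      (norm_prod_le_iff.mpr ⟨hk₁_norm.trans one_le_two, hk₂_norm.trans one_le_two⟩)
  have hdist : dist (h₁, h₂) (k₁, k₂) ≤ δ := by
    rw [dist_eq_norm]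
    exact norm_prod_le_iff.mpr ⟨hclose₁, hclose₂⟩
  have hlipschitz := hK.dist_le_mul (h₁, h₂) hh_mem (k₁, k₂) hk_mem
  rw [det_mul_sub_mul_eq_zero_of_mem_orthogonalGroup hodd hk₁ hk₂, Real.dist_eq, sub_zero]
    at hlipschitz
  calc |(h₁ * h₂ - h₂ * h₁).det| ≤ K * dist (h₁, h₂) (k₁, k₂) := hlipschitz
    _ ≤ (K + 1) * δ := by gcongr; exact le_add_of_nonneg_right zero_le_one

end Perturbation

lemma rpow_neg_one_div_natCast_pow {x : ℝ} (hx : 0 ≤ x) {n : ℕ} (hn : n ≠ 0) :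
    (x ^ (-(1 : ℝ) / (n : ℝ))) ^ n = x⁻¹ := by
  rw [neg_div, one_div, Real.rpow_neg hx, inv_pow, Real.rpow_inv_natCast_pow hx hn]

lemma IsSO.mem_orthogonalGroup {n : ℕ} {k : Matrix (Fin n) (Fin n) ℝ} (hk : IsSO k) :
    k ∈ orthogonalGroup (Fin n) ℝ :=
  (mem_orthogonalGroup_iff' (Fin n) ℝ).mpr hk.1

open scoped Matrix.Norms.Elementwise in
theorem stmt7_general {ι : Type*} [Fintype ι] [DecidableEq ι] (hodd : Odd (Fintype.card ι)) :
    ∃ C : ℝ, 0 < C ∧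
      ∀ (z : GL ι ℝ) (δ : ℝ), 0 ≤ δ → δ ≤ 1 →
      ∀ g₁ g₂ : Matrix ι ι ℝ, g₁.det ≠ 0 → g₂.det ≠ 0 →
      (∃ k₁ ∈ orthogonalGroup ι ℝ, ∀ i j, |((|g₁.det| ^ (-(1 : ℝ) / (Fintype.card ι : ℝ))) •
        (z⁻¹.val * g₁ * z.val) - k₁) i j| ≤ δ) →
      (∃ k₂ ∈ orthogonalGroup ι ℝ, ∀ i j, |((|g₂.det| ^ (-(1 : ℝ) / (Fintype.card ι : ℝ))) •
        (z⁻¹.val * g₂ * z.val) - k₂) i j| ≤ δ) →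
      |(g₁ * g₂ - g₂ * g₁).det| ≤ C * δ * |g₁.det| * |g₂.det| := by
  obtain ⟨C, hC, hbound⟩ := exists_abs_det_mul_sub_mul_le hodd
  refine ⟨C, hC, ?_⟩
  rintro z δ hδ_nonneg hδ g₁ g₂ hg₁ hg₂ ⟨k₁, hk₁, hclose₁⟩ ⟨k₂, hk₂, hclose₂⟩
  have hnormalized := hbound δ hδ _ _ k₁ hk₁ k₂ hk₂
    ((norm_le_iff hδ_nonneg).mpr hclose₁) ((norm_le_iff hδ_nonneg).mpr hclose₂)
  rw [det_smul_conj_mul_sub_mul, rpow_neg_one_div_natCast_pow (abs_nonneg _) hodd.pos.ne',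
    rpow_neg_one_div_natCast_pow (abs_nonneg _) hodd.pos.ne', ← mul_inv, abs_mul,
    abs_of_nonneg (by positivity), inv_mul_le_iff₀ (by positivity)] at hnormalized
  linarith

/-- For odd `n ≥ 3` there is `C > 0`, depending only on `n`, such that for
every `z ∈ GL_n(ℝ)`, every `δ ∈ (0,1]` and all `g₁, g₂` with positive determinant that are
`δ`-close to `SO(n)` after conjugating by `z` and renormalising, one has
`|det (g₁g₂ - g₂g₁)| ≤ C·δ·det g₁·det g₂`. -/
theorem stmt7 (n : ℕ) (hn : 3 ≤ n) (hodd : Odd n) :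
    ∃ C : ℝ, 0 < C ∧
      ∀ (z : Matrix.GeneralLinearGroup (Fin n) ℝ) (δ : ℝ), 0 < δ → δ ≤ 1 →
      ∀ g₁ g₂ : Matrix (Fin n) (Fin n) ℝ, 0 < g₁.det → 0 < g₂.det →
      (∃ k₁ : Matrix (Fin n) (Fin n) ℝ, IsSO k₁ ∧
        ∀ i j, |((g₁.det ^ (-(1 : ℝ) / (n : ℝ))) •
          ((↑z⁻¹ : Matrix (Fin n) (Fin n) ℝ) * g₁ * (↑z : Matrix (Fin n) (Fin n) ℝ)) - k₁) i j| ≤ δ) →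
      (∃ k₂ : Matrix (Fin n) (Fin n) ℝ, IsSO k₂ ∧
        ∀ i j, |((g₂.det ^ (-(1 : ℝ) / (n : ℝ))) •
          ((↑z⁻¹ : Matrix (Fin n) (Fin n) ℝ) * g₂ * (↑z : Matrix (Fin n) (Fin n) ℝ)) - k₂) i j| ≤ δ) →
      |(g₁ * g₂ - g₂ * g₁).det| ≤ C * δ * g₁.det * g₂.det := by
  obtain ⟨C, hC, hbound⟩ := stmt7_general (ι := Fin n) (by rwa [Fintype.card_fin])
  refine ⟨C, hC, ?_⟩
  rintro z δ hδ_pos hδ g₁ g₂ hg₁ hg₂ ⟨k₁, hk₁, hclose₁⟩ ⟨k₂, hk₂, hclose₂⟩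
  simpa only [abs_of_pos hg₁, abs_of_pos hg₂] using hbound z δ hδ_pos.le hδ g₁ g₂ hg₁.ne' hg₂.ne'
    ⟨k₁, hk₁.mem_orthogonalGroup, by simpa [abs_of_pos hg₁] using hclose₁⟩
    ⟨k₂, hk₂.mem_orthogonalGroup, by simpa [abs_of_pos hg₂] using hclose₂⟩
end

section
/- Let p ≥ 3 be a prime. There exists a constant C ≥ 1 depending only on p such that: for every real-split central division ℚ-algebra A of degree p, every order 𝒪 ⊆ A, every z ∈ GL_p(ℝ), every δ ∈ (0,1] and every real L ≥ 1, the ℚ-subalgebra of A generated by the union ⋃_{1≤m≤L} 𝒪(m; z, δ) (union over positive integers m ≤ L) is contained in the ℚ-linear span of ⋃_{1≤m≤L^{2p-2}} 𝒪(m; z, C·δ). -/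
open Matrix

/-- The set `𝒪(m; z, δ)` of elements `γ ∈ 𝒪` with `nr γ = m` such that
`m^{-1/n} ⬝ z⁻¹ (ι γ) z` is within `δ` (entrywise) of some `k ∈ SO(n)`. -/
noncomputable def OSet {n : ℕ} {A : Type*} [DivisionRing A] [CharZero A]
    (ι : A →ₐ[ℚ] Matrix (Fin n) (Fin n) ℝ) (O : Subring A)
    (z : Matrix.GeneralLinearGroup (Fin n) ℝ) (m : ℕ) (δ : ℝ) : Set A :=
  {γ | γ ∈ O ∧ (ι γ).det = (m : ℝ) ∧
    ∃ k : Matrix (Fin n) (Fin n) ℝ, IsSO k ∧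
      ∀ i j, |(((m : ℝ) ^ (-(1 : ℝ) / (n : ℝ))) •
        ((↑z⁻¹ : Matrix (Fin n) (Fin n) ℝ) * ι γ * (↑z : Matrix (Fin n) (Fin n) ℝ)) - k) i j| < δ}

/-!
If `1 ∈ S`, the spans of `S ^ k` over a division ring `D` increase strictly until they become
constant, so `S ^ (d - 1)` already spans everything as soon as `d` bounds the dimension over `D`.
A non-scalar `g ∈ S` generates a subfield `K` of `A` of degree `p` over `F`, with `A` of dimension
`p` over `K`. Hence `K` is spanned over `F` by the powers of `g` of exponent at most `p - 1`, the
algebra generated by `S` lies in the `K`-span of `S ^ (p - 1)`, and so it lies in the `F`-span of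
`S ^ (2 * p - 2)`. Reduced norms multiply in products, and a product of matrices within `ε` and
`η` of `SO(n)` is within `n * (ε + η + ε * η)` of it, which for `η = δ ≤ 1` and `ε = c * δ` with
`1 ≤ c` is at most `3 * n * c * δ`.
-/

open Module Submodule
open scoped Pointwise

section SpanPow

variable {D A : Type*} [Semiring D] [Semiring A] [Module D A]

lemma span_pow_monotone {S : Set A} (hS : 1 ∈ S) : Monotone fun k : ℕ ↦ span D (S ^ k) :=
  fun _ _ hkl ↦ span_mono (Set.pow_subset_pow_right hS hkl)

variable [IsScalarTower D A A]

lemma mul_mem_span_mul {X Y : Set A} {x y : A} (hx : x ∈ span D X) (hy : y ∈ Y) :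
    x * y ∈ span D (X * Y) := by
  induction hx using span_induction with
  | mem x hx => exact subset_span (Set.mul_mem_mul hx hy)
  | zero => simp
  | add x x' _ _ hx hx' => simpa only [add_mul] using add_mem hx hx'
  | smul a x _ hx => simpa only [smul_mul_assoc] using smul_mem _ a hx

lemma span_mul_le_span_mul {X X' : Set A} (h : span D X ≤ span D X') (Y : Set A) :
    span D (X * Y) ≤ span D (X' * Y) := by
  rw [span_le]
  rintro _ ⟨x, hx, y, hy, rfl⟩
  exact mul_mem_span_mul (h (subset_span hx)) hy

lemma submonoidClosure_subset_span_pow {S : Set A} {n : ℕ} (hS : 1 ∈ S)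
    (hn : span D (S ^ (n + 1)) ≤ span D (S ^ n)) :
    (Submonoid.closure S : Set A) ⊆ span D (S ^ n) := by
  intro x hx
  induction hx using Submonoid.closure_induction_right with
  | one => exact subset_span (Set.one_mem_pow hS)
  | mul_right x _ s hs ih => exact hn (pow_succ S n ▸ mul_mem_span_mul ih hs)

end SpanPow

section StableSpanPow

variable {D A : Type*} [DivisionRing D] [Ring A] [Nontrivial A] [Module D A] [IsScalarTower D A A]
  [Module.Finite D A]

lemma span_pow_succ_le_of_finrank_le {S : Set A} {n : ℕ} (hS : 1 ∈ S)
    (hn : ∀ k : ℕ, finrank D (span D (S ^ k)) ≤ n + 1) :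
    span D (S ^ (n + 1)) ≤ span D (S ^ n) := by
  let V (k : ℕ) : Submodule D A := span D (S ^ k)
  have V_mono : Monotone V := span_pow_monotone hS
  have finrank_pos (k : ℕ) : 1 ≤ finrank D (V k) :=
    one_le_finrank_iff.2 <|
      (Submodule.ne_bot_iff _).2 ⟨1, subset_span (Set.one_mem_pow hS), one_ne_zero⟩
  -- The shift by one accounts for the span of `S ^ 0`, which already has dimension one.
  have eq_of_finrank {k l : ℕ} (hkl : k ≤ l) (h : finrank D (V k) - 1 = finrank D (V l) - 1) :
      V k = V l :=
    eq_of_le_of_finrank_eq (V_mono hkl) (by have := finrank_pos k; have := finrank_pos l; omega)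
  have stable (k : ℕ) (h : finrank D (V k) - 1 = finrank D (V (k + 1)) - 1) :
      finrank D (V (k + 1)) - 1 = finrank D (V (k + 2)) - 1 := by
    have hle : span D (S ^ k * S * S) ≤ span D (S ^ k * S) :=
      span_mul_le_span_mul (pow_succ S k ▸ (eq_of_finrank k.le_succ h).ge) S
    rw [← pow_succ, ← pow_succ] at hle
    rw [(V_mono (k + 1).le_succ).antisymm hle]
  refine (eq_of_finrank n.le_succ (Nat.stabilises_of_monotone ?_ ?_ stable n.le_succ).symm).ge
  · exact fun k l hkl ↦ Nat.sub_le_sub_right (finrank_mono (V_mono hkl)) 1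
  · exact fun k ↦ Nat.sub_le_of_le_add (hn k)

lemma submonoidClosure_subset_span_pow_of_finrank_le {S : Set A} {n : ℕ}
    (hS : 1 ∈ S) (hn : finrank D (span D (Submonoid.closure S : Set A)) ≤ n + 1) :
    (Submonoid.closure S : Set A) ⊆ span D (S ^ n) :=
  submonoidClosure_subset_span_pow hS <| span_pow_succ_le_of_finrank_le hS fun _ ↦
    (finrank_mono (span_mono (Submonoid.pow_subset Submonoid.subset_closure))).trans hn

end StableSpanPow

section Subalgebra

variable {F A : Type*} [CommSemiring F] [Semiring A] [Algebra F A]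

lemma restrictScalars_span_subalgebra_le (K : Subalgebra F A) (X : Set A) :
    (span K X).restrictScalars F ≤ Subalgebra.toSubmodule K * span F X := by
  intro x hx
  induction hx using span_induction with
  | mem x hx => exact one_mul x ▸ mul_mem_mul K.one_mem (subset_span hx)
  | zero => exact zero_mem _
  | add x y _ _ hx hy => exact add_mem hx hy
  | smul a x _ hx =>
    rw [← Subalgebra.isIdempotentElem_toSubmodule K, mul_assoc]
    exact mul_mem_mul a.2 hx

lemma ne_top_of_isMulCommutative [Algebra.IsCentral F A] {K : Subalgebra F A}
    [IsMulCommutative K] (hK : K ≠ ⊥) : K ≠ ⊤ := by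
  rintro rfl
  refine hK (eq_bot_iff.2 (le_trans (fun a ha ↦ ?_) Algebra.IsCentral.out))
  exact Subalgebra.mem_center_iff.2 fun b ↦ setLike_mul_comm (Algebra.mem_top (x := b)) ha

end Subalgebra

section DivisionAlgebra

variable {F A : Type*} [Field F] [Ring A] [Algebra F A] [IsDomain A] [FiniteDimensional F A]

lemma finrank_mul_finrank_subalgebra (K : Subalgebra F A) :
    finrank F K * finrank K A = finrank F A :=
  let _ : DivisionRing K := divisionRingOfFiniteDimensional F K
  finrank_mul_finrank F K A

lemma adjoin_le_span_pow_add {S T : Set A} {m n : ℕ} (hT : 1 ∈ T) (hTS : T ⊆ S)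
    (hm : finrank F (Algebra.adjoin F T) ≤ m + 1) (hn : finrank (Algebra.adjoin F T) A ≤ n + 1) :
    Subalgebra.toSubmodule (Algebra.adjoin F S) ≤ span F (S ^ (m + n)) := by
  set K := Algebra.adjoin F T
  let _ : DivisionRing K := divisionRingOfFiniteDimensional F K
  have : Module.Finite K A := Module.Finite.of_restrictScalars_finite F K A
  have K_le : Subalgebra.toSubmodule K ≤ span F (S ^ m) := by
    have closure_le : (Submonoid.closure T : Set A) ⊆ span F (T ^ m) :=
      submonoidClosure_subset_span_pow_of_finrank_le hT (by rwa [← Algebra.adjoin_eq_span])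
    rw [Algebra.adjoin_eq_span, span_le]
    exact closure_le.trans (span_mono (Set.pow_subset_pow_left hTS))
  have closure_le : (Submonoid.closure S : Set A) ⊆ span K (S ^ n) :=
    submonoidClosure_subset_span_pow_of_finrank_le (hTS hT) ((Submodule.finrank_le _).trans hn)
  calc Subalgebra.toSubmodule (Algebra.adjoin F S)
      = span F (Submonoid.closure S : Set A) := Algebra.adjoin_eq_span F S
    _ ≤ (span K (S ^ n)).restrictScalars F := span_le.2 closure_le
    _ ≤ Subalgebra.toSubmodule K * span F (S ^ n) := restrictScalars_span_subalgebra_le K _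
    _ ≤ span F (S ^ m) * span F (S ^ n) := mul_le_mul' K_le le_rfl
    _ = span F (S ^ (m + n)) := by rw [span_mul_span, pow_add]

variable [Algebra.IsCentral F A]

lemma finrank_eq_of_isMulCommutative {p : ℕ} (hp : p.Prime) (hA : finrank F A = p ^ 2)
    {K : Subalgebra F A} [IsMulCommutative K] (hK : K ≠ ⊥) : finrank F K = p := by
  have hdvd : finrank F K ∣ p ^ 2 := hA ▸ Dvd.intro _ (finrank_mul_finrank_subalgebra K)
  obtain ⟨i, hi, hKi⟩ := (Nat.dvd_prime_pow hp).1 hdvd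
  interval_cases i
  · exact absurd (Subalgebra.finrank_eq_one_iff.1 (by simpa using hKi)) hK
  · simpa using hKi
  · refine absurd (Algebra.toSubmodule_eq_top.1 ?_) (ne_top_of_isMulCommutative hK)
    exact eq_top_of_finrank_eq (hKi.trans hA.symm)

theorem adjoin_le_span_pow_of_finrank_eq_sq {p : ℕ} (hp : p.Prime) (hA : finrank F A = p ^ 2)
    {S : Set A} (hS : 1 ∈ S) :
    Subalgebra.toSubmodule (Algebra.adjoin F S) ≤ span F (S ^ (2 * p - 2)) := by
  by_cases hscalar : S ⊆ (⊥ : Subalgebra F A)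
  · have hbot : Algebra.adjoin F S = ⊥ := eq_bot_iff.2 (Algebra.adjoin_le hscalar)
    rw [hbot, Algebra.toSubmodule_bot, one_eq_span, span_singleton_le_iff_mem]
    exact subset_span (Set.one_mem_pow hS)
  obtain ⟨g, hgS, hg⟩ := Set.not_subset.1 hscalar
  have hK : Algebra.adjoin F {1, g} = Algebra.adjoin F {g} := Algebra.adjoin_insert_one F {g}
  have finrank_K : finrank F (Algebra.adjoin F {1, g}) = p := by
    rw [hK]
    refine finrank_eq_of_isMulCommutative hp hA fun hbot ↦ hg ?_
    exact hbot ▸ Algebra.self_mem_adjoin_singleton F g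
  have finrank_A : finrank (Algebra.adjoin F {1, g}) A = p := by
    have htower := finrank_mul_finrank_subalgebra (Algebra.adjoin F {1, g})
    rw [finrank_K, hA, sq] at htower
    exact Nat.eq_of_mul_eq_mul_left hp.pos htower
  have hexp : 2 * p - 2 = (p - 1) + (p - 1) := by omega
  rw [hexp]
  refine adjoin_le_span_pow_add (T := {1, g}) (by simp) (Set.pair_subset hS hgS) ?_ ?_
  · rw [finrank_K, Nat.sub_add_cancel hp.one_le]
  · rw [finrank_A, Nat.sub_add_cancel hp.one_le]

end DivisionAlgebra

section NearRotation

variable {n : ℕ} {X Y : Matrix (Fin n) (Fin n) ℝ} {ε η : ℝ}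

lemma isSO_iff_mem_specialOrthogonalGroup {k : Matrix (Fin n) (Fin n) ℝ} :
    IsSO k ↔ k ∈ specialOrthogonalGroup (Fin n) ℝ := by
  rw [IsSO, mem_specialOrthogonalGroup_iff, mem_orthogonalGroup_iff']

lemma IsSO.one : IsSO (1 : Matrix (Fin n) (Fin n) ℝ) :=
  isSO_iff_mem_specialOrthogonalGroup.2 (one_mem _)

lemma IsSO.mul {k l : Matrix (Fin n) (Fin n) ℝ} (hk : IsSO k) (hl : IsSO l) : IsSO (k * l) :=
  isSO_iff_mem_specialOrthogonalGroup.2 <|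
    mul_mem (isSO_iff_mem_specialOrthogonalGroup.1 hk) (isSO_iff_mem_specialOrthogonalGroup.1 hl)

lemma IsSO.abs_apply_le_one {k : Matrix (Fin n) (Fin n) ℝ} (hk : IsSO k) (i j : Fin n) :
    |k i j| ≤ 1 := by
  have hk_unitary : k ∈ unitaryGroup (Fin n) ℝ := mem_unitaryGroup_iff'.2 hk.1
  exact entry_norm_bound_of_unitary hk_unitary i j

/-- `X` lies in the open `ε`-neighbourhood of `SO(n)` for the entrywise sup distance. -/
def IsNearSO (X : Matrix (Fin n) (Fin n) ℝ) (ε : ℝ) : Prop :=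
  ∃ k : Matrix (Fin n) (Fin n) ℝ, IsSO k ∧ ∀ i j, |(X - k) i j| < ε

lemma IsNearSO.one (hε : 0 < ε) : IsNearSO (1 : Matrix (Fin n) (Fin n) ℝ) ε :=
  ⟨1, IsSO.one, fun _ _ ↦ by simpa using hε⟩

lemma IsNearSO.mono (hX : IsNearSO X ε) (h : ε ≤ η) : IsNearSO X η :=
  let ⟨k, hk, hXk⟩ := hX
  ⟨k, hk, fun i j ↦ (hXk i j).trans_le h⟩

lemma IsNearSO.mul (hX : IsNearSO X ε) (hY : IsNearSO Y η) :
    IsNearSO (X * Y) (n * (ε + η + ε * η)) := by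
  obtain ⟨k, hk, hXk⟩ := hX
  obtain ⟨l, hl, hYl⟩ := hY
  refine ⟨k * l, hk.mul hl, fun i j ↦ ?_⟩
  have expand : X * Y - k * l = (X - k) * l + k * (Y - l) + (X - k) * (Y - l) := by noncomm_ring
  have term_lt (a : Fin n) :
      |(X - k) i a * l a j + k i a * (Y - l) a j + (X - k) i a * (Y - l) a j|
        < ε + η + ε * η := by
    have hε := (abs_nonneg _).trans (hXk i a).le
    have h₁ : |(X - k) i a * l a j| < ε := by
      rw [abs_mul]
      exact (mul_le_of_le_one_right (abs_nonneg _) (hl.abs_apply_le_one a j)).trans_lt (hXk i a)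
    have h₂ : |k i a * (Y - l) a j| < η := by
      rw [abs_mul]
      exact (mul_le_of_le_one_left (abs_nonneg _) (hk.abs_apply_le_one i a)).trans_lt (hYl a j)
    have h₃ : |(X - k) i a * (Y - l) a j| ≤ ε * η := by
      rw [abs_mul]
      exact mul_le_mul (hXk i a).le (hYl a j).le (abs_nonneg _) hε
    exact (abs_add_three _ _ _).trans_lt (add_lt_add_of_lt_of_le (add_lt_add h₁ h₂) h₃)
  calc |(X * Y - k * l) i j|
      = |∑ a, ((X - k) i a * l a j + k i a * (Y - l) a j + (X - k) i a * (Y - l) a j)| := by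
        simp only [expand, Matrix.add_apply, mul_apply, Finset.sum_add_distrib]
    _ ≤ ∑ a, |(X - k) i a * l a j + k i a * (Y - l) a j + (X - k) i a * (Y - l) a j| :=
        Finset.abs_sum_le_sum_abs _ _
    _ < ∑ _a : Fin n, (ε + η + ε * η) :=
        Finset.sum_lt_sum_of_nonempty ⟨i, Finset.mem_univ i⟩ fun a _ ↦ term_lt a
    _ = n * (ε + η + ε * η) := by
        rw [Finset.sum_const, Finset.card_univ, Fintype.card_fin, nsmul_eq_mul]

end NearRotation

section RescaledConj

variable {n : ℕ} (z : GeneralLinearGroup (Fin n) ℝ)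

/-- The matrix `m ^ (-1/n) • z⁻¹ M z`, which `OSet` compares with `SO(n)`: it has determinant one
when `det M = m > 0` and `n > 0`. -/
noncomputable def rescaledConj (m : ℕ) (M : Matrix (Fin n) (Fin n) ℝ) :
    Matrix (Fin n) (Fin n) ℝ :=
  (m : ℝ) ^ (-(1 : ℝ) / (n : ℝ)) • ((↑z⁻¹ : Matrix (Fin n) (Fin n) ℝ) * M *
    (↑z : Matrix (Fin n) (Fin n) ℝ))

lemma rescaledConj_one : rescaledConj z 1 1 = 1 := by
  simp only [rescaledConj, Nat.cast_one, Real.one_rpow, one_smul, mul_one, Units.inv_mul]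

lemma rescaledConj_mul (a b : ℕ) (M N : Matrix (Fin n) (Fin n) ℝ) :
    rescaledConj z (a * b) (M * N) = rescaledConj z a M * rescaledConj z b N := by
  simp only [rescaledConj, Nat.cast_mul, Real.mul_rpow a.cast_nonneg b.cast_nonneg,
    smul_mul_smul_comm, mul_assoc, Units.mul_inv_cancel_left]

end RescaledConj

section OSet

variable {n : ℕ} {A : Type*} [DivisionRing A] [CharZero A] {ι : A →ₐ[ℚ] Matrix (Fin n) (Fin n) ℝ}
  {O : Subring A} {z : GeneralLinearGroup (Fin n) ℝ} {a b : ℕ} {x y : A} {δ ε η L M : ℝ}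

lemma mem_OSet_iff :
    x ∈ OSet ι O z a ε ↔ x ∈ O ∧ (ι x).det = a ∧ IsNearSO (rescaledConj z a (ι x)) ε :=
  Iff.rfl

lemma one_mem_OSet (hε : 0 < ε) : (1 : A) ∈ OSet ι O z 1 ε := by
  rw [mem_OSet_iff, map_one, rescaledConj_one]
  exact ⟨O.one_mem, by simp, IsNearSO.one hε⟩

lemma OSet_mono (h : ε ≤ η) : OSet ι O z a ε ⊆ OSet ι O z a η :=
  fun _ ⟨hxO, hdet, hnear⟩ ↦ ⟨hxO, hdet, IsNearSO.mono hnear h⟩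

lemma mul_mem_OSet (hx : x ∈ OSet ι O z a ε) (hy : y ∈ OSet ι O z b η) :
    x * y ∈ OSet ι O z (a * b) (n * (ε + η + ε * η)) := by
  rw [mem_OSet_iff] at hx hy ⊢
  obtain ⟨hxO, hxdet, hxnear⟩ := hx
  obtain ⟨hyO, hydet, hynear⟩ := hy
  rw [map_mul, det_mul, hxdet, hydet, rescaledConj_mul]
  exact ⟨O.mul_mem hxO hyO, (Nat.cast_mul a b).symm, hxnear.mul hynear⟩

variable (ι O z) in
/-- The union `⋃_{1 ≤ m ≤ L} 𝒪(m; z, ε)` over integers `m`, with a real bound `L`. -/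
def OSetUpTo (L ε : ℝ) : Set A :=
  ⋃ m ∈ {m : ℕ | 1 ≤ m ∧ (m : ℝ) ≤ L}, OSet ι O z m ε

lemma mem_OSetUpTo_iff :
    x ∈ OSetUpTo ι O z L ε ↔ ∃ m : ℕ, (1 ≤ m ∧ (m : ℝ) ≤ L) ∧ x ∈ OSet ι O z m ε := by
  simp only [OSetUpTo, Set.mem_iUnion, Set.mem_ofPred_eq, exists_prop]

lemma one_mem_OSetUpTo (hL : 1 ≤ L) (hε : 0 < ε) : (1 : A) ∈ OSetUpTo ι O z L ε :=
  mem_OSetUpTo_iff.2 ⟨1, ⟨le_rfl, by simpa using hL⟩, one_mem_OSet hε⟩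

lemma OSetUpTo_mono (h : ε ≤ η) : OSetUpTo ι O z L ε ⊆ OSetUpTo ι O z L η :=
  Set.iUnion₂_mono fun _ _ ↦ OSet_mono h

lemma OSetUpTo_mul_subset :
    OSetUpTo ι O z L ε * OSetUpTo ι O z M η ⊆
      OSetUpTo ι O z (L * M) (n * (ε + η + ε * η)) := by
  rintro _ ⟨x, hx, y, hy, rfl⟩
  obtain ⟨a, ⟨ha, haL⟩, hxa⟩ := mem_OSetUpTo_iff.1 hx
  obtain ⟨b, ⟨hb, hbM⟩, hyb⟩ := mem_OSetUpTo_iff.1 hy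
  refine mem_OSetUpTo_iff.2 ⟨a * b, ⟨Nat.mul_pos ha hb, ?_⟩, mul_mem_OSet hxa hyb⟩
  rw [Nat.cast_mul]
  exact mul_le_mul haL hbM b.cast_nonneg (a.cast_nonneg.trans haL)

lemma OSetUpTo_pow_subset (hn : 1 ≤ n) (hδ : 0 < δ) (hδ1 : δ ≤ 1) (k : ℕ) :
    OSetUpTo ι O z L δ ^ k ⊆ OSetUpTo ι O z (L ^ k) ((3 * n) ^ k * δ) := by
  induction k with
  | zero =>
    rw [pow_zero, pow_zero, pow_zero, one_mul, Set.one_subset]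
    exact one_mem_OSetUpTo le_rfl hδ
  | succ k ih =>
    have hn' : (1 : ℝ) ≤ 3 * n := by exact_mod_cast (by omega : 1 ≤ 3 * n)
    set c : ℝ := (3 * n) ^ k
    have hc : 1 ≤ c := one_le_pow₀ hn'
    have error_le : c * δ + δ + c * δ * δ ≤ 3 * (c * δ) := by
      nlinarith [mul_pos (one_pos.trans_le hc) hδ]
    calc OSetUpTo ι O z L δ ^ (k + 1)
        ⊆ OSetUpTo ι O z (L ^ k) (c * δ) * OSetUpTo ι O z L δ := by
          rw [pow_succ]
          exact Set.mul_subset_mul_right ih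
      _ ⊆ OSetUpTo ι O z (L ^ k * L) (n * (c * δ + δ + c * δ * δ)) := OSetUpTo_mul_subset
      _ ⊆ OSetUpTo ι O z (L ^ (k + 1)) ((3 * n) ^ (k + 1) * δ) := by
          rw [← pow_succ]
          refine OSetUpTo_mono ((mul_le_mul_of_nonneg_left error_le n.cast_nonneg).trans_eq ?_)
          rw [pow_succ]
          ring

end OSet

theorem stmt8_general {p : ℕ} (hp : p.Prime) {A : Type*} [DivisionRing A] [CharZero A]
    (ι : A →ₐ[ℚ] Matrix (Fin p) (Fin p) ℝ) (hcenter : Subalgebra.center ℚ A = ⊥)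
    (hfinrank : Module.finrank ℚ A = p ^ 2) (O : Subring A) (z : GeneralLinearGroup (Fin p) ℝ)
    {δ L : ℝ} (hδ : 0 < δ) (hδ1 : δ ≤ 1) (hL : 1 ≤ L) :
    (Algebra.adjoin ℚ (⋃ m ∈ {m : ℕ | 1 ≤ m ∧ (m : ℝ) ≤ L}, OSet ι O z m δ) : Set A) ⊆
      (Submodule.span ℚ
        (⋃ m ∈ {m : ℕ | 1 ≤ m ∧ (m : ℝ) ≤ L ^ (2 * p - 2)},
          OSet ι O z m ((3 * p) ^ (2 * p - 2) * δ)) : Set A) := by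
  have : Algebra.IsCentral ℚ A := ⟨hcenter.le⟩
  have : FiniteDimensional ℚ A := .of_finrank_pos (hfinrank ▸ pow_pos hp.pos 2)
  calc (Algebra.adjoin ℚ (OSetUpTo ι O z L δ) : Set A)
      ⊆ span ℚ (OSetUpTo ι O z L δ ^ (2 * p - 2)) :=
        adjoin_le_span_pow_of_finrank_eq_sq hp hfinrank (one_mem_OSetUpTo hL hδ)
    _ ⊆ span ℚ (OSetUpTo ι O z (L ^ (2 * p - 2)) ((3 * p) ^ (2 * p - 2) * δ)) :=
        span_mono (OSetUpTo_pow_subset hp.one_le hδ hδ1 _)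

/-- For a prime `p ≥ 3` there is `C ≥ 1`, depending only on `p`, such that
the `ℚ`-subalgebra generated by `⋃_{1 ≤ m ≤ L} 𝒪(m; z, δ)` is contained in the `ℚ`-linear
span of `⋃_{1 ≤ m ≤ L^(2p-2)} 𝒪(m; z, Cδ)`. -/
theorem stmt8 (p : ℕ) (hp : p.Prime) (hp3 : 3 ≤ p) :
    ∃ C : ℝ, 1 ≤ C ∧
      ∀ (A : Type) [DivisionRing A] [CharZero A]
        (ι : A →ₐ[ℚ] Matrix (Fin p) (Fin p) ℝ),
        Function.Injective ι →
        Subalgebra.center ℚ A = ⊥ →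
        Module.finrank ℚ A = p ^ 2 →
        ∀ O : Subring A, IsOrder A O →
        ∀ (z : Matrix.GeneralLinearGroup (Fin p) ℝ) (δ L : ℝ), 0 < δ → δ ≤ 1 → 1 ≤ L →
        (Algebra.adjoin ℚ
            (⋃ m ∈ {m : ℕ | 1 ≤ m ∧ (m : ℝ) ≤ L}, OSet ι O z m δ) : Set A) ⊆
          (Submodule.span ℚ
            (⋃ m ∈ {m : ℕ | 1 ≤ m ∧ (m : ℝ) ≤ L ^ (2 * p - 2)},
              OSet ι O z m (C * δ)) : Set A) := by
  have one_le_base : (1 : ℝ) ≤ 3 * p := by exact_mod_cast (by omega : 1 ≤ 3 * p)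
  exact ⟨(3 * p) ^ (2 * p - 2), one_le_pow₀ one_le_base,
    fun A _ _ ι _ hcenter hfinrank O _ z δ L hδ hδ1 hL ↦
      stmt8_general hp ι hcenter hfinrank O z hδ hδ1 hL⟩
end

section
/- Let p ≥ 3 be a prime. There exists a constant C > 0 depending only on p such that: for every real-split central division ℚ-algebra A of degree p, every commutative ℚ-subalgebra E ⊆ A with dim_ℚ E = p (necessarily a field of degree p over ℚ) with 𝒪_E the integral closure of ℤ in E, every z ∈ GL_p(ℝ), every δ > 0 and every positive integer m, the number of γ ∈ 𝒪_E with nr(γ) = m for which there exists k ∈ SO(p) with every entry of m^{-1/p}·z⁻¹(ι γ)z − k of absolute value less than δ is at most C · τ(m)^{p-1} · (1+δ)^{p-1}. -/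
open Matrix

/-!
A relation `∑ cᵢ ι(aᵢ) = 0` with `cᵢ ∈ ℂ` linearly independent over `ℚ` forces `aᵢ = 0`, since `A`
is a central division algebra; hence `ℂ ⊗ A` embeds into `M_n(ℂ)`, and the eigenvalues of `ι x` for
`x` in a maximal subfield `K` are the `σ x`, where `σ` runs over the complex embeddings of `K`. So
`det (ι x)` is the field norm, and closeness to a compact group bounds every `|σ x|` by a multiple
of `m ^ (1 / n)`.

An ideal of norm `m` is determined by the norms of its parts along the `n` colors of a coloring
of the primes which separates the primes above each rational prime, and these norms form a
factorization of `m` into `n` factors; so there are at most `τ(m) ^ (n - 1)` such ideals. Generators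
of one ideal differ by units. Their logarithmic embeddings, translated into the trace-zero
hyperplane of dimension `n - 1`, lie in a box of size `O(1 + log (1 + δ))`; each unit cube contains
boundedly many of them because there are boundedly many algebraic integers of degree `n` with small
conjugates.
-/

universe u

open Module (finrank)
open scoped TensorProduct

section CentralDivisionAlgebra

variable {k L A M ι : Type*} [Field k] [CommRing L] [Algebra k L] [DivisionRing A] [Algebra k A]
  [Algebra.IsCentral k A] [Ring M] [Algebra L M] [Algebra k M] [IsScalarTower k L M]
  [FaithfulSMul L M]

lemma eq_zero_of_sum_smul_map_eq_zero_of_mem_center (φ : A →ₐ[k] M) {c : ι → L}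
    (hc : LinearIndependent k c) {s : Finset ι} {a : ι → A}
    (ha : ∀ i ∈ s, a i ∈ Subalgebra.center k A) (h : ∑ i ∈ s, c i • φ (a i) = 0) :
    ∀ i ∈ s, a i = 0 := by
  choose! q hq using fun i hi ↦ (Algebra.IsCentral.mem_center_iff k).1 (ha i hi)
  have hsum : algebraMap L M (∑ i ∈ s, q i • c i) = 0 := by
    rw [← h, map_sum]
    refine Finset.sum_congr rfl fun i hi ↦ ?_
    rw [hq i hi, AlgHom.commutes, Algebra.algebraMap_eq_smul_one, Algebra.algebraMap_eq_smul_one,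
      smul_assoc, smul_comm]
  have hrel : ∑ i ∈ s, q i • c i = 0 :=
    (map_eq_zero_iff _ (FaithfulSMul.algebraMap_injective L M)).1 hsum
  intro i hi
  rw [hq i hi, linearIndependent_iff'.1 hc s q hrel i hi, map_zero]

-- Normalise one coefficient to `1`; commutators with `t : A` then give a shorter relation, so all
-- coefficients are central.
lemma eq_zero_of_sum_smul_map_eq_zero (φ : A →ₐ[k] M) {c : ι → L} (hc : LinearIndependent k c)
    (s : Finset ι) (a : ι → A) (h : ∑ i ∈ s, c i • φ (a i) = 0) : ∀ i ∈ s, a i = 0 := by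
  classical
  induction s using Finset.induction_on generalizing a with
  | empty => simp
  | insert j s hj ih =>
    suffices haj : a j = 0 by
      rw [Finset.sum_insert hj, haj, map_zero, smul_zero, zero_add] at h
      exact Finset.forall_mem_insert _ _ _ |>.2 ⟨haj, ih a h⟩
    by_contra haj
    set b : ι → A := fun i ↦ (a j)⁻¹ * a i
    have hbj : b j = 1 := inv_mul_cancel₀ haj
    have hb : ∑ i ∈ insert j s, c i • φ (b i) = 0 := by
      simpa only [b, map_mul, Finset.mul_sum, mul_smul_comm, mul_zero] using
        congrArg (φ (a j)⁻¹ * ·) h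
    have hcomm (t : A) : ∀ i ∈ s, t * b i - b i * t = 0 := by
      refine ih _ ?_
      have hcomm_sum : ∑ i ∈ insert j s, c i • φ (t * b i - b i * t) = 0 := by
        simpa [Finset.mul_sum, Finset.sum_mul, ← Finset.sum_sub_distrib, smul_sub] using
          congrArg (fun u ↦ φ t * u - u * φ t) hb
      simpa [Finset.sum_insert hj, hbj] using hcomm_sum
    have hcenter : ∀ i ∈ insert j s, b i ∈ Subalgebra.center k A := by
      refine Finset.forall_mem_insert _ _ _ |>.2 ⟨hbj ▸ one_mem _, fun i hi ↦ ?_⟩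
      exact Subalgebra.mem_center_iff.2 fun t ↦ sub_eq_zero.1 (hcomm t i hi)
    have hbj_zero :=
      eq_zero_of_sum_smul_map_eq_zero_of_mem_center φ hc hcenter hb j (Finset.mem_insert_self j s)
    exact one_ne_zero (hbj.symm.trans hbj_zero)

variable (L) in
theorem liftBaseChange_injective_of_isCentral (φ : A →ₐ[k] M) :
    Function.Injective (φ.toLinearMap.liftBaseChange L) := by
  rw [injective_iff_map_eq_zero]
  intro t ht
  obtain ⟨a, rfl⟩ := TensorProduct.eq_repr_basis_left (Module.Basis.ofVectorSpace k L) t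
  simp only [Finsupp.sum, map_sum, LinearMap.liftBaseChange_tmul, AlgHom.toLinearMap_apply] at ht
  have ha := eq_zero_of_sum_smul_map_eq_zero φ (Module.Basis.linearIndependent _) a.support a ht
  exact Finset.sum_eq_zero fun i hi ↦ by simp [ha i hi]

end CentralDivisionAlgebra

section MaximalSubfield

variable {k K A Ω ι : Type*} [Field k] [Field K] [Algebra k K] [DivisionRing A] [Algebra k A]
  [Algebra.IsCentral k A] [Field Ω] [Algebra k Ω]

-- Both sides are images of `P (1 ⊗ x)` for `1 ⊗ x ∈ Ω ⊗ K`, the left one under an injection.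
lemma aeval_eq_zero_of_aeval_algHom_apply_eq_zero {M : Type*} [Ring M] [Algebra Ω M] [Algebra k M]
    [IsScalarTower k Ω M] [FaithfulSMul Ω M] (φ : A →ₐ[k] M) (f : K →ₐ[k] A) (σ : K →ₐ[k] Ω)
    {x : K} {P : Polynomial Ω} (h : Polynomial.aeval (φ (f x)) P = 0) :
    Polynomial.aeval (σ x) P = 0 := by
  have hA : Polynomial.aeval (1 ⊗ₜ[k] f x : Ω ⊗[k] A) P = 0 := by
    apply liftBaseChange_injective_of_isCentral Ω φ
    rw [map_zero, ← h, Polynomial.aeval_eq_sum_range, Polynomial.aeval_eq_sum_range, map_sum]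
    simp [Algebra.TensorProduct.tmul_pow]
  have hK : Polynomial.aeval (1 ⊗ₜ[k] x : Ω ⊗[k] K) P = 0 := by
    let g : Ω ⊗[k] K →ₐ[Ω] Ω ⊗[k] A := Algebra.TensorProduct.map (AlgHom.id Ω Ω) f
    have hg : Function.Injective g :=
      Module.Flat.lTensor_preserves_injective_linearMap f.toLinearMap f.toRingHom.injective
    apply hg
    rw [← Polynomial.aeval_algHom_apply, map_zero, ← hA]
    simp [g]
  let ev : Ω ⊗[k] K →ₐ[Ω] Ω := Algebra.TensorProduct.lift (AlgHom.id Ω Ω) σ fun _ _ ↦ .all _ _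
  simpa [ev, ← Polynomial.aeval_algHom_apply] using congrArg ev hK

variable [Fintype ι] [DecidableEq ι]

lemma hasEigenvalue_toLin'_algHom [Nonempty ι] (φ : A →ₐ[k] Matrix ι ι Ω) (f : K →ₐ[k] A)
    (x : K) (σ : K →ₐ[k] Ω) : Module.End.HasEigenvalue (toLin' (φ (f x))) (σ x) := by
  apply Module.End.hasEigenvalue_of_isRoot
  rw [Matrix.minpoly_toLin', Polynomial.IsRoot, ← Polynomial.coe_aeval_eq_eval]
  exact aeval_eq_zero_of_aeval_algHom_apply_eq_zero φ f σ (minpoly.aeval Ω _)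

lemma mulVec_aeval_eq_smul_of_mulVec_eq_smul (ψ : K →ₐ[k] Matrix ι ι Ω) (σ : K →ₐ[k] Ω) {x : K}
    {v : ι → Ω} (hv : ψ x *ᵥ v = σ x • v) (q : Polynomial k) :
    ψ (Polynomial.aeval x q) *ᵥ v = σ (Polynomial.aeval x q) • v := by
  induction q using Polynomial.induction_on with
  | C a => simp [Algebra.algebraMap_eq_smul_one, Matrix.smul_mulVec]
  | add p q hp hq => simp only [map_add, add_mulVec, add_smul, hp, hq]
  | monomial d a h =>
    rw [pow_succ, ← mul_assoc, map_mul _ _ Polynomial.X, Polynomial.aeval_X, map_mul ψ, map_mul σ,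
      ← mulVec_mulVec, hv, mulVec_smul, h, smul_smul, mul_comm]

variable [IsAlgClosed Ω] [FiniteDimensional k K] [Algebra.IsSeparable k K]

theorem exists_basis_mulVec_eq_smul (φ : A →ₐ[k] Matrix ι ι Ω) (f : K →ₐ[k] A)
    (hK : finrank k K = Fintype.card ι) :
    ∃ b : Module.Basis (K →ₐ[k] Ω) Ω (ι → Ω), ∀ x σ, φ (f x) *ᵥ b σ = σ x • b σ := by
  have : Nonempty ι := Fintype.card_pos_iff.1 (hK ▸ Module.finrank_pos)
  have θ := Field.powerBasisOfFiniteOfSeparable k K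
  choose v hv using fun σ ↦ (hasEigenvalue_toLin'_algHom φ f θ.gen σ).exists_hasEigenvector
  have hli : LinearIndependent Ω v := Module.End.eigenvectors_linearIndependent' _
    (fun σ : K →ₐ[k] Ω ↦ σ θ.gen) (fun _ _ h ↦ θ.algHom_ext h) v hv
  have hcard : Fintype.card (K →ₐ[k] Ω) = finrank Ω (ι → Ω) := by
    rw [AlgHom.card, hK, Module.finrank_fintype_fun_eq_card]
  have : Nonempty (K →ₐ[k] Ω) := Fintype.card_pos_iff.1 (hcard ▸ Module.finrank_pos)
  refine ⟨basisOfLinearIndependentOfCardEqFinrank hli hcard, fun x σ ↦ ?_⟩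
  obtain ⟨q, rfl⟩ := θ.exists_eq_aeval' x
  rw [coe_basisOfLinearIndependentOfCardEqFinrank]
  exact mulVec_aeval_eq_smul_of_mulVec_eq_smul (φ.comp f) σ (hv σ).apply_eq_smul q

lemma det_eq_algebraMap_norm (φ : A →ₐ[k] Matrix ι ι Ω) (f : K →ₐ[k] A)
    (hK : finrank k K = Fintype.card ι) (x : K) :
    (φ (f x)).det = algebraMap k Ω (Algebra.norm k x) := by
  classical
  obtain ⟨b, hb⟩ := exists_basis_mulVec_eq_smul φ f hK
  have hdiag : LinearMap.toMatrix b b (toLin' (φ (f x))) = diagonal fun σ : K →ₐ[k] Ω ↦ σ x := by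
    ext τ σ
    rw [LinearMap.toMatrix_apply, toLin'_apply, hb]
    simp +contextual [Finsupp.single_apply, diagonal_apply, eq_comm]
  rw [← LinearMap.det_toLin', ← LinearMap.det_toMatrix b, hdiag, det_diagonal,
    Algebra.norm_eq_prod_embeddings k Ω]

end MaximalSubfield

lemma norm_eigenvalue_le_card_mul {𝕜 ι : Type*} [NormedField 𝕜] [Fintype ι] [DecidableEq ι]
    {N : Matrix ι ι 𝕜} {B : ℝ} (hN : ∀ i j, ‖N i j‖ ≤ B) {μ : 𝕜}
    (hμ : Module.End.HasEigenvalue (toLin' N) μ) : ‖μ‖ ≤ Fintype.card ι * B := by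
  obtain ⟨i, hi⟩ := eigenvalue_mem_ball hμ
  rw [mem_closedBall_iff_norm] at hi
  calc ‖μ‖ ≤ ‖N i i‖ + ‖μ - N i i‖ := norm_le_norm_add_norm_sub' μ (N i i)
    _ ≤ ‖N i i‖ + ∑ j ∈ Finset.univ.erase i, ‖N i j‖ := by gcongr
    _ = ∑ j, ‖N i j‖ := Finset.add_sum_erase _ (fun j ↦ ‖N i j‖) (Finset.mem_univ i)
    _ ≤ ∑ _j : ι, B := Finset.sum_le_sum fun j _ ↦ hN i j
    _ = Fintype.card ι * B := by simp

section IdealsOfGivenNorm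

open Ideal UniqueFactorizationMonoid

lemma prod_prod_map_filter_eq {α ι M : Type*} [CommMonoid M] [Fintype ι] [DecidableEq ι]
    (c : α → ι) (f : α → M) (t : Multiset α) :
    ∏ j, ((t.filter (c · = j)).map f).prod = (t.map f).prod := by
  induction t using Multiset.induction_on with
  | empty => simp
  | cons a t ih =>
    have hcons (j : ι) : (((a ::ₘ t).filter (c · = j)).map f).prod =
        (if c a = j then f a else 1) * ((t.filter (c · = j)).map f).prod := by
      split_ifs with h <;> simp [h]
    simp_rw [hcons, Finset.prod_mul_distrib, ih]
    simp

lemma card_finMulAntidiag_le (d n : ℕ) :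
    (Nat.finMulAntidiag d n).card ≤ n.divisors.card ^ (d - 1) := by
  cases d with
  | zero => exact Finset.card_le_one_of_subsingleton _
  | succ d =>
    rw [Nat.add_sub_cancel, ← Fintype.card_piFinset_const]
    refine Finset.card_le_card_of_injOn Fin.init (fun g hg ↦ ?_) fun g hg h hh hgh ↦ ?_
    · exact Fintype.mem_piFinset.2 fun i ↦ Nat.mem_divisors.2
        ⟨Nat.dvd_of_mem_finMulAntidiag hg _, (Nat.mem_finMulAntidiag.1 hg).2⟩
    · obtain ⟨hg, hn⟩ := Nat.mem_finMulAntidiag.1 hg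
      have hprod : (∏ i : Fin d, g i.castSucc) * g (Fin.last d) =
          (∏ i : Fin d, g i.castSucc) * h (Fin.last d) := by
        have hinit (i : Fin d) : g i.castSucc = h i.castSucc := congrFun hgh i
        rw [← Fin.prod_univ_castSucc, hg, ← (Nat.mem_finMulAntidiag.1 hh).1,
          Fin.prod_univ_castSucc, Finset.prod_congr rfl fun i _ ↦ hinit i]
      rw [← hg, Fin.prod_univ_castSucc] at hn
      have hlast := Nat.eq_of_mul_eq_mul_left (Nat.pos_of_ne_zero (left_ne_zero_of_mul hn)) hprod
      rw [← Fin.snoc_init_self g, ← Fin.snoc_init_self h, hgh, hlast]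

section Coloring

variable (R S : Type*) [CommRing R] [IsDomain R] [CommRing S] [Algebra R S] [Module.Finite R S]
  [Module.Flat R S]

variable {R} in
lemma encard_primesOver_le_finrank (p : Ideal R) [p.IsPrime] :
    (p.primesOver S).encard ≤ finrank R S := by
  have := (Algebra.QuasiFinite.finite_primesOver (S := S) p).fintype
  have hpos (q : p.primesOver S) : 1 ≤ q.1.ramificationIdx R * q.1.inertiaDeg R :=
    Nat.mul_pos (q.1.ramificationIdx_pos R) (q.1.inertiaDeg_pos R)
  rw [← Set.coe_fintypeCard, Nat.cast_le, ← sum_ramification_inertia_eq_finrank p S]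
  simpa using Finset.card_nsmul_le_sum Finset.univ _ 1 fun q _ ↦ hpos q

lemma exists_coloring_injOn_primesOver [NeZero (finrank R S)] :
    ∃ c : Ideal S → Fin (finrank R S), ∀ p : Ideal R, Set.InjOn c (p.primesOver S) := by
  have hex (p : Ideal R) : ∃ c : Ideal S → Fin (finrank R S), Set.InjOn c (p.primesOver S) := by
    by_cases hp : p.IsPrime
    · have hcard : (p.primesOver S).encard ≤ (Set.univ : Set (Fin (finrank R S))).encard := by
        simpa using encard_primesOver_le_finrank S p
      obtain ⟨c, -, hc⟩ :=
        (Algebra.QuasiFinite.finite_primesOver p).exists_injOn_of_encard_le hcard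
      exact ⟨c, hc⟩
    · refine ⟨fun _ ↦ 0, fun P hP ↦ (hp ?_).elim⟩
      have := hP.1
      exact hP.2.over ▸ inferInstance
  choose c hc using hex
  refine ⟨fun P ↦ c (P.under R) P, fun p P hP Q hQ h ↦ hc p hP hQ ?_⟩
  simpa only [← hP.2.over, ← hQ.2.over] using h

end Coloring

variable {S : Type*} [CommRing S] [IsDedekindDomain S] [Module.Free ℤ S]

/-- The norm of the part of `I` made up of its prime factors of color `j`, counted with
multiplicity. For a coloring that separates the primes above each rational prime, these norms
determine `I`. -/
noncomputable def colorNorm {d : ℕ} (c : Ideal S → Fin d) (I : Ideal S) (j : Fin d) : ℕ :=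
  (((normalizedFactors I).filter (c · = j)).map absNorm).prod

lemma prod_colorNorm {d : ℕ} (c : Ideal S → Fin d) {I : Ideal S} (hI : I ≠ ⊥) :
    ∏ j, colorNorm c I j = absNorm I := by
  simp_rw [colorNorm]
  rw [prod_prod_map_filter_eq, ← map_multiset_prod, Ideal.prod_normalizedFactors_eq_self hI]

variable [Module.Finite ℤ S]

lemma exists_absNorm_eq_absNorm_under_pow (P : Ideal S) [P.IsPrime] [NeZero P] :
    ∃ f ≠ 0, absNorm P = absNorm (P.under ℤ) ^ f := by
  have := IsPrime.isMaximal ‹_› (NeZero.ne P)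
  obtain ⟨p, f, hf, -, hp, hP⟩ := exists_prime_and_absNorm_eq_pow P
  have hprime := Nat.absNorm_under_prime P
  have hdvd : absNorm (P.under ℤ) ∣ p ^ f := hP ▸ Int.absNorm_under_dvd_absNorm P
  rw [(Nat.prime_dvd_prime_iff_eq hprime hp).1 (hprime.dvd_of_dvd_pow hdvd)]
  exact ⟨f, hf.ne', hP⟩

lemma factorization_absNorm_under_eq_zero_iff (P Q : Ideal S) [P.IsPrime] [NeZero P] [Q.IsPrime]
    [NeZero Q] : (absNorm Q).factorization (absNorm (P.under ℤ)) = 0 ↔ Q.under ℤ ≠ P.under ℤ := by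
  obtain ⟨f, hf, hQ⟩ := exists_absNorm_eq_absNorm_under_pow Q
  have habs : absNorm (Q.under ℤ) = absNorm (P.under ℤ) ↔ Q.under ℤ = P.under ℤ := by
    refine ⟨fun h ↦ ?_, congrArg _⟩
    rw [← Int.ideal_span_absNorm_eq_self (Q.under ℤ), h, Int.ideal_span_absNorm_eq_self]
  rw [hQ, (Nat.absNorm_under_prime Q).factorization_pow, Finsupp.single_apply_eq_zero, ne_eq,
    ← habs]
  simp [hf, eq_comm]

lemma factorization_prod_map_absNorm [DecidableEq (Ideal S)] {t : Multiset (Ideal S)}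
    {P : Ideal S} [P.IsPrime] [NeZero P] (ht : ∀ Q ∈ t, Prime Q)
    (hP : ∀ Q ∈ t, Q.under ℤ = P.under ℤ → Q = P) :
    (t.map absNorm).prod.factorization (absNorm (P.under ℤ)) =
      t.count P * (absNorm P).factorization (absNorm (P.under ℤ)) := by
  induction t using Multiset.induction_on with
  | empty => simp
  | cons Q t ih =>
    rw [Multiset.forall_mem_cons] at ht hP
    have := isPrime_of_prime ht.1
    have : NeZero Q := ⟨ht.1.ne_zero⟩
    have hQ0 : absNorm Q ≠ 0 := absNorm_eq_zero_iff.not.2 ht.1.ne_zero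
    have ht0 : (t.map absNorm).prod ≠ 0 := Multiset.prod_ne_zero fun h ↦ by
      obtain ⟨J, hJ, hJ0⟩ := Multiset.mem_map.1 h
      exact (ht.2 J hJ).ne_zero (absNorm_eq_zero_iff.1 hJ0)
    rw [Multiset.map_cons, Multiset.prod_cons, Nat.factorization_mul hQ0 ht0, Finsupp.add_apply,
      ih ht.2 hP.2, Multiset.count_cons]
    obtain rfl | hQP := eq_or_ne Q P
    · rw [if_pos rfl]; ring
    · rw [(factorization_absNorm_under_eq_zero_iff P Q).2 (hQP ∘ hP.1), if_neg hQP.symm]; ring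

lemma eq_of_prod_map_absNorm_eq {t u : Multiset (Ideal S)} (ht : ∀ P ∈ t, Prime P)
    (hu : ∀ P ∈ u, Prime P) (hinj : Set.InjOn (under ℤ) {P | P ∈ t + u})
    (h : (t.map absNorm).prod = (u.map absNorm).prod) : t = u := by
  classical
  ext P
  by_cases hP : P ∈ t + u
  · have hprime : Prime P := (Multiset.mem_add.1 hP).elim (ht P) (hu P)
    have := isPrime_of_prime hprime
    have : NeZero P := ⟨hprime.ne_zero⟩
    have hpos : 0 < (absNorm P).factorization (absNorm (P.under ℤ)) :=
      Nat.pos_of_ne_zero ((factorization_absNorm_under_eq_zero_iff P P).not.2 (by simp))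
    refine Nat.eq_of_mul_eq_mul_right hpos ?_
    rw [← factorization_prod_map_absNorm ht fun Q hQ ↦ hinj (Multiset.mem_add.2 (.inl hQ)) hP, h,
      factorization_prod_map_absNorm hu fun Q hQ ↦ hinj (Multiset.mem_add.2 (.inr hQ)) hP]
  · simp only [Multiset.mem_add, not_or] at hP
    rw [Multiset.count_eq_zero_of_notMem hP.1, Multiset.count_eq_zero_of_notMem hP.2]

lemma eq_of_colorNorm_eq {d : ℕ} {c : Ideal S → Fin d}
    (hc : ∀ p : Ideal ℤ, Set.InjOn c (p.primesOver S)) {I J : Ideal S} (hI : I ≠ ⊥) (hJ : J ≠ ⊥)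
    (h : colorNorm c I = colorNorm c J) : I = J := by
  classical
  have hprime {I P : Ideal S} {j : Fin d} (hP : P ∈ (normalizedFactors I).filter (c · = j)) :
      Prime P := prime_of_normalized_factor P (Multiset.mem_of_mem_filter hP)
  have hfilter (j : Fin d) :
      (normalizedFactors I).filter (c · = j) = (normalizedFactors J).filter (c · = j) := by
    refine eq_of_prod_map_absNorm_eq (fun P ↦ hprime) (fun P ↦ hprime) ?_ (congrFun h j)
    have hmem {P : Ideal S} (hP : P ∈ (normalizedFactors I).filter (c · = j) +
        (normalizedFactors J).filter (c · = j)) : P.IsPrime ∧ c P = j :=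
      (Multiset.mem_add.1 hP).elim
        (fun h ↦ ⟨isPrime_of_prime (hprime h), (Multiset.mem_filter.1 h).2⟩)
        (fun h ↦ ⟨isPrime_of_prime (hprime h), (Multiset.mem_filter.1 h).2⟩)
    intro P hP Q hQ hPQ
    exact hc (P.under ℤ) ⟨(hmem hP).1, ⟨rfl⟩⟩ ⟨(hmem hQ).1, ⟨hPQ⟩⟩
      ((hmem hP).2.trans (hmem hQ).2.symm)
  have hfactors : normalizedFactors I = normalizedFactors J := by
    ext P
    simpa [Multiset.count_filter] using congrArg (Multiset.count P) (hfilter (c P))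
  rw [← Ideal.prod_normalizedFactors_eq_self hI, hfactors, Ideal.prod_normalizedFactors_eq_self hJ]

theorem ncard_setOf_absNorm_eq_le {m : ℕ} (hm : m ≠ 0) :
    {I : Ideal S | absNorm I = m}.ncard ≤ m.divisors.card ^ (finrank ℤ S - 1) := by
  have : NeZero (finrank ℤ S) := ⟨Module.finrank_pos.ne'⟩
  obtain ⟨c, hc⟩ := exists_coloring_injOn_primesOver ℤ S
  have hbot {I : Ideal S} (hI : absNorm I = m) : I ≠ ⊥ := by
    rintro rfl; exact hm (by simpa using hI.symm)
  refine le_trans ?_ (card_finMulAntidiag_le _ m)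
  rw [← Set.ncard_coe_finset]
  refine Set.ncard_le_ncard_of_injOn (colorNorm c) (fun I hI ↦ ?_) (fun I hI J hJ ↦ ?_)
    (Finset.finite_toSet _)
  · exact Nat.mem_finMulAntidiag.2 ⟨(prod_colorNorm c (hbot hI)).trans hI, hm⟩
  · exact eq_of_colorNorm_eq hc (hbot hI) (hbot hJ)

end IdealsOfGivenNorm

section Packing

variable {ι : Type*} [Fintype ι]

lemma abs_le_card_mul_of_sum_eq_zero {u : ι → ℝ} {T : ℝ} (hT : 0 ≤ T) (hsum : ∑ i, u i = 0)
    (hu : ∀ i, u i ≤ T) (i : ι) : |u i| ≤ Fintype.card ι * T := by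
  have hsub : T - u i ≤ Fintype.card ι * T :=
    calc T - u i ≤ ∑ j, (T - u j) :=
          Finset.single_le_sum (f := fun j ↦ T - u j) (fun j _ ↦ sub_nonneg.2 (hu j))
            (Finset.mem_univ i)
      _ = Fintype.card ι * T := by simp [Finset.sum_sub_distrib, hsum]
  have hcard : (1 : ℝ) ≤ Fintype.card ι := mod_cast Fintype.card_pos_iff.2 ⟨i⟩
  exact abs_le.2 ⟨by linarith, (hu i).trans (le_mul_of_one_le_left hT hcard)⟩

lemma abs_le_one_of_forall_ne_card_mul_abs_le_one {u : ι → ℝ} (hsum : ∑ i, u i = 0) {i₀ : ι}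
    (hu : ∀ i ≠ i₀, Fintype.card ι * |u i| ≤ 1) (i : ι) : |u i| ≤ 1 := by
  classical
  have hcard : (1 : ℝ) ≤ Fintype.card ι := mod_cast Fintype.card_pos_iff.2 ⟨i⟩
  obtain rfl | hi := eq_or_ne i i₀
  · have hrest : u i = -∑ j ∈ Finset.univ.erase i, u j := by
      rw [← Finset.add_sum_erase _ _ (Finset.mem_univ i)] at hsum
      exact eq_neg_of_add_eq_zero_left hsum
    calc |u i| ≤ ∑ j ∈ Finset.univ.erase i, |u j| := by
          rw [hrest, abs_neg]; exact Finset.abs_sum_le_sum_abs _ _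
      _ ≤ ∑ _j ∈ Finset.univ.erase i, (Fintype.card ι : ℝ)⁻¹ := by
          refine Finset.sum_le_sum fun j hj ↦ ?_
          rw [← one_div, le_div_iff₀' (by positivity)]
          exact hu j (Finset.ne_of_mem_erase hj)
      _ ≤ ∑ _j : ι, (Fintype.card ι : ℝ)⁻¹ :=
          Finset.sum_le_sum_of_subset_of_nonneg (Finset.erase_subset _ _) fun _ _ _ ↦ by positivity
      _ = 1 := by simp [(by positivity : (Fintype.card ι : ℝ) ≠ 0)]
  · exact (le_mul_of_one_le_left (abs_nonneg _) hcard).trans (hu i hi)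

lemma two_mul_natCeil_add_one_le {a T : ℝ} (ha : 1 ≤ a) (hT : 0 ≤ T) :
    (2 * ⌈a * T⌉₊ + 1 : ℝ) ≤ 3 * a * (1 + T) := by
  have := Nat.ceil_lt_add_one (by positivity : 0 ≤ a * T)
  nlinarith [mul_nonneg (zero_le_one.trans ha) hT]

lemma floor_mem_Icc_of_abs_le {a : ℝ} {L : ℤ} (h : |a| ≤ L) : ⌊a⌋ ∈ Finset.Icc (-L) L := by
  obtain ⟨hlower, hupper⟩ := abs_le.1 h
  refine Finset.mem_Icc.2 ⟨Int.le_floor.2 (by push_cast; exact hlower), ?_⟩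
  exact_mod_cast (Int.floor_le a).trans hupper

-- The points of a trace-zero box are sorted by all but one of their coordinates, rounded to
-- multiples of `1 / card ι`; the remaining coordinate is determined by the others.
theorem card_le_mul_pow_of_sum_eq_zero [Nonempty ι] {α : Type*} {F : Finset α} {l : α → ι → ℝ}
    {T : ℝ} (hT : 0 ≤ T) (hsum : ∀ x ∈ F, ∑ i, l x i = 0) (hle : ∀ x ∈ F, ∀ i, l x i ≤ T) {N : ℕ}
    (hN : ∀ G ⊆ F, (∀ x ∈ G, ∀ y ∈ G, ∀ i, |l x i - l y i| ≤ 1) → G.card ≤ N) :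
    (F.card : ℝ) ≤ N * (3 * Fintype.card ι ^ 2 * (1 + T)) ^ (Fintype.card ι - 1) := by
  classical
  obtain ⟨i₀⟩ := ‹Nonempty ι›
  set d := Fintype.card ι
  set L := ⌈(d : ℝ) ^ 2 * T⌉₊
  have hd : (1 : ℝ) ≤ d := mod_cast Fintype.card_pos_iff.2 ⟨i₀⟩
  let cell (x : α) (i : {i // i ≠ i₀}) : ℤ := ⌊d * l x i⌋
  have hcell : ∀ x ∈ F, cell x ∈ Fintype.piFinset fun _ ↦ Finset.Icc (-L : ℤ) L := by
    intro x hx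
    refine Fintype.mem_piFinset.2 fun i ↦ floor_mem_Icc_of_abs_le ?_
    calc |d * l x i| = d * |l x i| := by rw [abs_mul, Nat.abs_cast]
      _ ≤ d * (d * T) := by
          gcongr
          exact abs_le_card_mul_of_sum_eq_zero hT (hsum x hx) (hle x hx) i
      _ = d ^ 2 * T := by ring
      _ ≤ (L : ℤ) := by rw [Int.cast_natCast]; exact Nat.le_ceil _
  have hfiber (b : {i // i ≠ i₀} → ℤ) : (F.filter (cell · = b)).card ≤ N := by
    refine hN _ (Finset.filter_subset _ _) fun x hx y hy ↦ ?_
    obtain ⟨hxF, hxb⟩ := Finset.mem_filter.1 hx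
    obtain ⟨hyF, hyb⟩ := Finset.mem_filter.1 hy
    refine abs_le_one_of_forall_ne_card_mul_abs_le_one (i₀ := i₀) ?_ fun i hi ↦ ?_
    · rw [Finset.sum_sub_distrib, hsum x hxF, hsum y hyF, sub_zero]
    · have := Int.abs_sub_lt_one_of_floor_eq_floor (congrFun (hxb.trans hyb.symm) ⟨i, hi⟩)
      rw [← mul_sub, abs_mul, Nat.abs_cast] at this
      exact this.le
  have hcard := Finset.card_le_mul_card_image_of_maps_to hcell N fun b _ ↦ hfiber b
  calc (F.card : ℝ) ≤ N * (2 * L + 1) ^ (d - 1) := by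
        refine (Nat.cast_le.2 hcard).trans_eq ?_
        have hIcc : (L + 1 + L : ℤ).toNat = 2 * L + 1 := by omega
        simp [d, hIcc]
    _ ≤ N * (3 * d ^ 2 * (1 + T)) ^ (d - 1) := by
        gcongr
        exact two_mul_natCeil_add_one_le (one_le_pow₀ hd) hT

end Packing

section SmallIntegers

theorem exists_finite_forall_embedding_mem (n : ℕ) (B : ℝ) : ∃ s : Set ℂ, s.Finite ∧
    ∀ (K : Type*) [Field K] [NumberField K], finrank ℚ K = n → ∀ x : K, IsIntegral ℤ x →
      (∀ σ : K →+* ℂ, ‖σ x‖ ≤ B) → ∀ σ : K →+* ℂ, σ x ∈ s := by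
  classical
  set L : ℤ := ⌈max B 1 ^ n * n.choose (n / 2)⌉
  refine ⟨_, Polynomial.bUnion_roots_finite (algebraMap ℤ ℂ) n (Set.finite_Icc (-L) L), ?_⟩
  intro K _ _ hK x hx hB σ
  have hmin := minpoly.isIntegrallyClosed_eq_field_fractions' ℚ hx
  simp only [Set.mem_iUnion]
  refine ⟨minpoly ℤ x, ⟨?_, fun i ↦ ?_⟩, ?_⟩
  · rw [← (minpoly.monic hx).natDegree_map (algebraMap ℤ ℚ), ← hmin, ← hK]
    exact minpoly.natDegree_le x
  · have hcoeff := NumberField.Embeddings.coeff_bdd_of_norm_le hB i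
    rw [hmin, Polynomial.coeff_map, hK] at hcoeff
    have hbound : |((minpoly ℤ x).coeff i : ℝ)| ≤ max B 1 ^ n * n.choose (n / 2) := by
      simpa [← Int.norm_eq_abs] using hcoeff
    exact abs_le.1 (mod_cast hbound.trans (Int.le_ceil _))
  · rw [Finset.mem_coe, Multiset.mem_toFinset,
      Polynomial.mem_roots ((minpoly.monic hx).map _).ne_zero, Polynomial.IsRoot,
      Polynomial.eval_map_algebraMap]
    exact (Polynomial.aeval_algHom_apply σ.toIntAlgHom x _).trans (by simp)

lemma exists_forall_card_le_of_norm_embedding_le (n : ℕ) (B : ℝ) :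
    ∃ N : ℕ, ∀ (K : Type*) [Field K] [NumberField K], finrank ℚ K = n → ∀ F : Finset K,
      (∀ x ∈ F, IsIntegral ℤ x ∧ ∀ σ : K →+* ℂ, ‖σ x‖ ≤ B) → F.card ≤ N := by
  obtain ⟨s, hs, hmem⟩ := exists_finite_forall_embedding_mem n B
  refine ⟨hs.toFinset.card, fun K _ _ hK F hF ↦ ?_⟩
  obtain ⟨σ⟩ : Nonempty (K →+* ℂ) := inferInstance
  refine Finset.card_le_card_of_injOn σ (fun x hx ↦ ?_) σ.injective.injOn
  exact hs.mem_toFinset.2 (hmem K hK x (hF x hx).1 (hF x hx).2 σ)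

end SmallIntegers

section NumberField

open NumberField Ideal

variable {K : Type*} [Field K] {x y : 𝓞 K} {σ : K →+* ℂ} {R : ℝ}

lemma norm_embedding_pos (hx : x ≠ 0) (σ : K →+* ℂ) : 0 < ‖σ x‖ := by
  simpa using hx

lemma isIntegral_div_of_span_eq (hxy : span {x} = span {y}) : IsIntegral ℤ (x / y : K) := by
  obtain ⟨u, rfl⟩ := Ideal.mem_span_singleton.1 (hxy ▸ Ideal.mem_span_singleton_self x)
  obtain rfl | hy := eq_or_ne y 0
  · simpa using isIntegral_zero
  · have hy' : (y : K) ≠ 0 := by simpa using hy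
    rw [RingOfIntegers.coe_eq_algebraMap, map_mul, mul_div_cancel_left₀ _ hy']
    exact u.isIntegral_coe

variable [NumberField K]

lemma prod_norm_embedding_eq_absNorm_span (x : 𝓞 K) :
    ∏ σ : K →+* ℂ, ‖σ x‖ = absNorm (span {x}) := by
  have hprod : ∏ σ : K →+* ℂ, σ x = (Algebra.norm ℤ x : ℂ) :=
    calc ∏ σ : K →+* ℂ, σ x = ∏ σ : K →ₐ[ℚ] ℂ, σ x :=
          Fintype.prod_equiv (RingHom.equivRatAlgHom K ℂ) _ _ fun _ ↦ rfl
      _ = (Algebra.norm ℤ x : ℂ) := by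
          rw [← Algebra.norm_eq_prod_embeddings ℚ ℂ (x : K), ← Algebra.coe_norm_int]
          simp
  rw [← norm_prod, hprod, Complex.norm_intCast, absNorm_span_singleton, Nat.cast_natAbs,
    Int.cast_abs]

/-- The logarithmic embedding of `x`, indexed by all complex embeddings and translated so that it
has trace zero when `x ≠ 0`; it measures the generators of an ideal against each other. -/
noncomputable def normalizedLog (x : 𝓞 K) (σ : K →+* ℂ) : ℝ :=
  Real.log ‖σ x‖ - Real.log (absNorm (span {x})) / finrank ℚ K

lemma sum_normalizedLog (hx : x ≠ 0) : ∑ σ, normalizedLog x σ = 0 := by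
  simp only [normalizedLog, Finset.sum_sub_distrib]
  rw [← Real.log_prod fun σ _ ↦ (norm_embedding_pos hx σ).ne', prod_norm_embedding_eq_absNorm_span]
  simp [Embeddings.card, mul_div_cancel₀, Module.finrank_pos.ne']

lemma normalizedLog_le_log (hx : x ≠ 0) (hR : 0 < R)
    (h : ‖σ x‖ ≤ R * (absNorm (span {x}) : ℝ) ^ (1 / finrank ℚ K : ℝ)) :
    normalizedLog x σ ≤ Real.log R := by
  have hpos : (0 : ℝ) < absNorm (span {x}) := by
    rw [← prod_norm_embedding_eq_absNorm_span]
    exact Finset.prod_pos fun σ _ ↦ norm_embedding_pos hx σ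
  have hlog := Real.log_le_log (norm_embedding_pos hx σ) h
  rw [Real.log_mul hR.ne' (by positivity), Real.log_rpow hpos] at hlog
  rw [normalizedLog, sub_le_iff_le_add]
  exact hlog.trans_eq (by ring)

lemma norm_embedding_div_le_exp (hx : x ≠ 0) (hy : y ≠ 0) (hxy : span {x} = span {y}) {c : ℝ}
    (h : |normalizedLog x σ - normalizedLog y σ| ≤ c) : ‖σ (x / y)‖ ≤ Real.exp c := by
  have hx := norm_embedding_pos hx σ
  have hy := norm_embedding_pos hy σ
  rw [map_div₀, norm_div, ← Real.log_le_iff_le_exp (div_pos hx hy), Real.log_div hx.ne' hy.ne']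
  refine le_trans (le_of_eq ?_) ((le_abs_self _).trans h)
  simp [normalizedLog, hxy]

-- Generators of one ideal differ by units, and units of bounded size are few.
theorem exists_forall_card_le_of_span_eq (n : ℕ) :
    ∃ C > 0, ∀ (K : Type u) [Field K] [NumberField K], finrank ℚ K = n → ∀ R : ℝ, 1 ≤ R →
      ∀ I : Ideal (𝓞 K), I ≠ ⊥ → ∀ F : Finset (𝓞 K),
      (∀ x ∈ F, span {x} = I ∧ ∀ σ : K →+* ℂ, ‖σ x‖ ≤ R * (absNorm I : ℝ) ^ (1 / n : ℝ)) →
      F.card ≤ C * R ^ (n - 1) := by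
  classical
  obtain ⟨N, hN⟩ := exists_forall_card_le_of_norm_embedding_le n (Real.exp 1)
  refine ⟨(N + 1) * (3 * n ^ 2 + 1) ^ (n - 1), by positivity, ?_⟩
  rintro K _ _ rfl R hR I hI F hF
  have hR_pos : 0 < R := zero_lt_one.trans_le hR
  have hne {x} (hx : x ∈ F) : x ≠ 0 := by
    rintro rfl
    exact hI (by rw [← (hF 0 hx).1]; simp)
  have hspan {x y} (hx : x ∈ F) (hy : y ∈ F) : span {x} = span {y} :=
    (hF x hx).1.trans (hF y hy).1.symm
  have hcluster : ∀ G ⊆ F, (∀ x ∈ G, ∀ y ∈ G, ∀ σ, |normalizedLog x σ - normalizedLog y σ| ≤ 1) →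
      G.card ≤ N := by
    intro G hG hclose
    obtain rfl | ⟨y, hy⟩ := G.eq_empty_or_nonempty
    · simp
    have hinj : Function.Injective fun x : 𝓞 K ↦ (x / y : K) := fun x x' h ↦ by
      simpa [hne (hG hy)] using h
    rw [← Finset.card_image_of_injective G hinj]
    refine hN K rfl _ (Finset.forall_mem_image.2 fun x hx ↦ ?_)
    have hxy := hspan (hG hx) (hG hy)
    exact ⟨isIntegral_div_of_span_eq hxy, fun σ ↦
      norm_embedding_div_le_exp (hne (hG hx)) (hne (hG hy)) hxy (hclose x hx y hy σ)⟩
  have hlog_nonneg := Real.log_nonneg hR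
  have hlog_le := Real.log_le_sub_one_of_pos hR_pos
  have hpack := card_le_mul_pow_of_sum_eq_zero hlog_nonneg (fun x hx ↦ sum_normalizedLog (hne hx))
    (fun x hx σ ↦ normalizedLog_le_log (hne hx) hR_pos ((hF x hx).1 ▸ (hF x hx).2 σ)) hcluster
  rw [Embeddings.card] at hpack
  calc (F.card : ℝ) ≤ N * (3 * finrank ℚ K ^ 2 * (1 + Real.log R)) ^ (finrank ℚ K - 1) := hpack
    _ ≤ (N + 1) * ((3 * finrank ℚ K ^ 2 + 1) * R) ^ (finrank ℚ K - 1) := by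
        gcongr <;> linarith
    _ = _ := by rw [mul_pow]; ring

theorem exists_forall_ncard_le_of_absNorm_span_eq (n : ℕ) :
    ∃ C > 0, ∀ (K : Type u) [Field K] [NumberField K], finrank ℚ K = n → ∀ R : ℝ, 1 ≤ R →
      ∀ m : ℕ, m ≠ 0 → ∀ s : Set (𝓞 K),
      (∀ x ∈ s, absNorm (span {x}) = m ∧ ∀ σ : K →+* ℂ, ‖σ x‖ ≤ R * (m : ℝ) ^ (1 / n : ℝ)) →
      s.Finite ∧ s.ncard ≤ C * m.divisors.card ^ (n - 1) * R ^ (n - 1) := by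
  classical
  obtain ⟨C, hC, hfiber⟩ := exists_forall_card_le_of_span_eq.{u} n
  refine ⟨C, hC, ?_⟩
  rintro K _ _ rfl R hR m hm s hs
  have hfin : s.Finite :=
    ((Embeddings.finite_of_norm_le K ℂ _).preimage RingOfIntegers.coe_injective.injOn).subset
      fun x hx ↦ ⟨x.isIntegral_coe, (hs x hx).2⟩
  refine ⟨hfin, ?_⟩
  have hideals : {I : Ideal (𝓞 K) | absNorm I = m}.Finite := finite_setOfPred_absNorm_eq m
  have hmaps : ∀ x ∈ hfin.toFinset, span {x} ∈ hideals.toFinset := fun x hx ↦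
    hideals.mem_toFinset.2 (hs x (hfin.mem_toFinset.1 hx)).1
  have hcard : ∀ I ∈ hideals.toFinset,
      ((hfin.toFinset.filter (span {·} = I)).card : ℝ) ≤ C * R ^ (finrank ℚ K - 1) := by
    intro I hI
    have hIm : absNorm I = m := hideals.mem_toFinset.1 hI
    refine hfiber K rfl R hR I (by rintro rfl; simp [eq_comm, hm] at hIm) _ fun x hx ↦ ?_
    rw [Finset.mem_filter, hfin.mem_toFinset] at hx
    exact ⟨hx.2, hIm ▸ (hs x hx.1).2⟩
  have hideals_card := ncard_setOf_absNorm_eq_le (S := 𝓞 K) hm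
  rw [RingOfIntegers.rank, Set.ncard_eq_toFinset_card _ hideals] at hideals_card
  calc (s.ncard : ℝ)
      = ∑ I ∈ hideals.toFinset, ((hfin.toFinset.filter (span {·} = I)).card : ℝ) := by
        rw [Set.ncard_eq_toFinset_card _ hfin, Finset.card_eq_sum_card_fiberwise hmaps,
          Nat.cast_sum]
    _ ≤ hideals.toFinset.card * (C * R ^ (finrank ℚ K - 1)) := by
        simpa using Finset.sum_le_card_nsmul _ _ _ hcard
    _ ≤ (m.divisors.card ^ (finrank ℚ K - 1) : ℕ) * (C * R ^ (finrank ℚ K - 1)) := by gcongr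
    _ = _ := by push_cast; ring

end NumberField

section MatrixRepresentation

open NumberField Ideal

lemma exists_numberField_algHom_range_eq {A : Type u} [DivisionRing A] [Algebra ℚ A]
    (E : Subalgebra ℚ A) [FiniteDimensional ℚ E] (hcomm : ∀ x ∈ E, ∀ y ∈ E, x * y = y * x) :
    ∃ (K : Type u) (_ : Field K) (_ : NumberField K) (f : K →ₐ[ℚ] A), f.range = E := by
  let _ : CommRing E := { E.toRing with mul_comm x y := Subtype.ext (hcomm x x.2 y y.2) }
  let _ : Field E := (isField_of_isIntegral_of_isField' (Field.toIsField ℚ)).toField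
  have : CharZero E := algebraRat.charZero E
  have hE : NumberField E :=
    { to_finiteDimensional := by
        convert ‹FiniteDimensional ℚ E›
        exact Subsingleton.elim _ _ }
  refine ⟨E, inferInstance, hE, E.subtype.toRatAlgHom, SetLike.coe_injective ?_⟩
  exact Subtype.range_coe

variable {A K ι : Type*} [DivisionRing A] [Algebra ℚ A] [Algebra.IsCentral ℚ A] [Field K]
  [NumberField K] [Fintype ι] [DecidableEq ι]

lemma norm_embedding_le_of_abs_le [Nonempty ι] (φ : A →ₐ[ℚ] Matrix ι ι ℝ) (f : K →ₐ[ℚ] A) {x : K}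
    {B : ℝ} (h : ∀ i j, |φ (f x) i j| ≤ B) (σ : K →+* ℂ) : ‖σ x‖ ≤ Fintype.card ι * B := by
  let φℂ : A →ₐ[ℚ] Matrix ι ι ℂ := (Complex.ofRealAm.mapMatrix.restrictScalars ℚ).comp φ
  refine norm_eigenvalue_le_card_mul (fun i j ↦ ?_)
    (hasEigenvalue_toLin'_algHom φℂ f x σ.toRatAlgHom)
  simpa [φℂ] using h i j

lemma absNorm_span_eq_of_det_eq (φ : A →ₐ[ℚ] Matrix ι ι ℝ) (f : K →ₐ[ℚ] A)
    (hK : finrank ℚ K = Fintype.card ι) {x : 𝓞 K} {m : ℕ} (h : (φ (f x)).det = m) :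
    absNorm (span {x}) = m := by
  let φℂ : A →ₐ[ℚ] Matrix ι ι ℂ := (Complex.ofRealAm.mapMatrix.restrictScalars ℚ).comp φ
  have hdet : (φℂ (f x)).det = m := by
    rw [← Complex.ofReal_natCast, ← h]
    exact (Complex.ofRealHom.map_det _).symm
  rw [det_eq_algebraMap_norm φℂ f hK, ← Algebra.coe_norm_int] at hdet
  have hnorm : Algebra.norm ℤ x = m := Int.cast_injective (α := ℂ) (by simpa using hdet)
  rw [absNorm_span_singleton, hnorm, Int.natAbs_natCast]

theorem exists_forall_ncard_le_of_det_eq {n : ℕ} (hn : n ≠ 0) :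
    ∃ C : ℝ, 0 < C ∧ ∀ (A : Type u) [DivisionRing A] [Algebra ℚ A] [Algebra.IsCentral ℚ A]
      (φ : A →ₐ[ℚ] Matrix (Fin n) (Fin n) ℝ) (E : Subalgebra ℚ A),
      (∀ x ∈ E, ∀ y ∈ E, x * y = y * x) → finrank ℚ E = n →
      ∀ R : ℝ, 1 ≤ R → ∀ m : ℕ, m ≠ 0 → ∀ s : Set A,
      (∀ γ ∈ s, γ ∈ E ∧ IsIntegral ℤ γ ∧ (φ γ).det = m ∧
        ∀ i j, |φ γ i j| ≤ R * (m : ℝ) ^ (1 / n : ℝ)) →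
      s.Finite ∧ s.ncard ≤ C * m.divisors.card ^ (n - 1) * R ^ (n - 1) := by
  have : NeZero n := ⟨hn⟩
  obtain ⟨C, hC, hcount⟩ := exists_forall_ncard_le_of_absNorm_span_eq.{u} n
  refine ⟨C * n ^ (n - 1), by positivity, ?_⟩
  intro A _ _ _ φ E hcomm hE R hR m hm s hs
  have : FiniteDimensional ℚ E := Module.finite_of_finrank_pos (by lia)
  obtain ⟨K, _, _, f, rfl⟩ := exists_numberField_algHom_range_eq E hcomm
  have hK : finrank ℚ K = n := (AlgEquiv.ofInjectiveField f).toLinearEquiv.finrank_eq.trans hE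
  let g (x : 𝓞 K) : A := f x
  have hg : Function.Injective g := f.toRingHom.injective.comp RingOfIntegers.coe_injective
  have hrange : s ⊆ Set.range g := by
    intro γ hγ
    obtain ⟨⟨x, rfl⟩, hint, -⟩ := hs γ hγ
    exact ⟨⟨x, (isIntegral_algHom_iff (f.restrictScalars ℤ) f.toRingHom.injective).1 hint⟩, rfl⟩
  have hR' : 1 ≤ n * R := one_le_mul_of_one_le_of_one_le (by exact_mod_cast NeZero.one_le) hR
  obtain ⟨hfin, hcard⟩ := hcount K hK (n * R) hR' m hm (g ⁻¹' s) fun x hx ↦ by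
    obtain ⟨-, -, hdet, habs⟩ := hs _ hx
    exact ⟨absNorm_span_eq_of_det_eq φ f (by simpa using hK) hdet, fun σ ↦
      (norm_embedding_le_of_abs_le φ f habs σ).trans_eq (by rw [Fintype.card_fin, mul_assoc])⟩
  rw [← Set.image_preimage_eq_of_subset hrange]
  refine ⟨hfin.image g, ?_⟩
  rw [Set.ncard_image_of_injective _ hg]
  refine hcard.trans_eq ?_
  rw [mul_pow]
  ring

end MatrixRepresentation

lemma abs_le_of_abs_smul_sub_lt {ι : Type*} [Fintype ι] [DecidableEq ι] {M k : Matrix ι ι ℝ}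
    (hk : k ∈ Matrix.orthogonalGroup ι ℝ) {c δ : ℝ} (hc : 0 < c) {i j : ι}
    (h : |(c⁻¹ • M - k) i j| < δ) : |M i j| ≤ (1 + δ) * c := by
  have hkij : |k i j| ≤ 1 := entry_norm_bound_of_unitary hk i j
  have hM := (abs_sub_abs_le_abs_sub (c⁻¹ * M i j) (k i j)).trans_lt h
  rw [abs_mul, abs_of_pos (inv_pos.2 hc)] at hM
  rw [← div_le_iff₀ hc, div_eq_inv_mul]
  linarith

theorem stmt11_general (n : ℕ) (hn : n ≠ 0) :
    ∃ C : ℝ, 0 < C ∧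
      ∀ (A : Type u) [DivisionRing A] [Algebra ℚ A] [Algebra.IsCentral ℚ A]
        (ι : A →ₐ[ℚ] Matrix (Fin n) (Fin n) ℝ) (E : Subalgebra ℚ A),
        (∀ x ∈ E, ∀ y ∈ E, x * y = y * x) → finrank ℚ E = n →
        ∀ (z : Matrix.GeneralLinearGroup (Fin n) ℝ) (δ : ℝ), 0 < δ → ∀ m : ℕ, m ≠ 0 →
        ∀ s : Set A, (∀ γ ∈ s, γ ∈ E ∧ IsIntegral ℤ γ ∧ (ι γ).det = m ∧
          ∃ k ∈ Matrix.orthogonalGroup (Fin n) ℝ, ∀ i j,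
            |((m : ℝ) ^ (-1 / n : ℝ) • ((z⁻¹).val * ι γ * z.val) - k) i j| < δ) →
        s.Finite ∧ s.ncard ≤ C * m.divisors.card ^ (n - 1) * (1 + δ) ^ (n - 1) := by
  obtain ⟨C, hC, hcount⟩ := exists_forall_ncard_le_of_det_eq.{u} hn
  refine ⟨C, hC, fun A _ _ _ ι E hcomm hE z δ hδ m hm s hs ↦ ?_⟩
  let conj := MulSemiringAction.toAlgHom ℚ (Matrix (Fin n) (Fin n) ℝ) (ConjAct.toConjAct z⁻¹)
  have hconj (M) : conj M = (z⁻¹).val * M * z.val := by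
    simp [conj, ConjAct.units_smul_def]
  refine hcount A (conj.comp ι) E hcomm hE (1 + δ) (by linarith) m hm s fun γ hγ ↦ ?_
  obtain ⟨hγE, hint, hdet, k, hk, hclose⟩ := hs γ hγ
  refine ⟨hγE, hint, ?_, fun i j ↦ ?_⟩
  · rw [AlgHom.comp_apply, hconj, Matrix.det_units_conj', hdet]
  · rw [AlgHom.comp_apply, hconj]
    refine abs_le_of_abs_smul_sub_lt hk (by positivity) (?_ : |(_ - k) i j| < δ)
    rw [← Real.rpow_neg (by positivity), ← neg_div]
    exact hclose i j

/-- For a prime `p ≥ 3` there is `C > 0` depending only on `p` such that: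
for every degree-`p` commutative subalgebra (subfield) `E ⊆ A` with ring of integers `𝒪_E`
(the integral closure of `ℤ` in `E`), every `z ∈ GL_p(ℝ)`, every `δ > 0` and every positive
integer `m`, the number of `γ ∈ 𝒪_E` with `nr γ = m` such that `m^(-1/p) · z⁻¹ (ι γ) z` is
within `δ` (entrywise) of some `k ∈ SO(p)` is at most `C · τ(m)^(p-1) · (1+δ)^(p-1)`. -/
theorem stmt11 (p : ℕ) (hp : p.Prime) (hp3 : 3 ≤ p) :
    ∃ C : ℝ, 0 < C ∧
      ∀ (A : Type) [DivisionRing A] [CharZero A]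
        (ι : A →ₐ[ℚ] Matrix (Fin p) (Fin p) ℝ),
        Function.Injective ι →
        Subalgebra.center ℚ A = ⊥ →
        Module.finrank ℚ A = p ^ 2 →
        ∀ E : Subalgebra ℚ A, (∀ x ∈ E, ∀ y ∈ E, x * y = y * x) →
          Module.finrank ℚ E = p →
        ∀ z : Matrix.GeneralLinearGroup (Fin p) ℝ,
        ∀ δ : ℝ, 0 < δ →
        ∀ m : ℕ, 1 ≤ m →
        {γ : A | γ ∈ E ∧ IsIntegral ℤ γ ∧ (ι γ).det = (m : ℝ) ∧
            ∃ k : Matrix (Fin p) (Fin p) ℝ, IsSO k ∧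
              ∀ i j, |(((m : ℝ) ^ (-(1 : ℝ) / (p : ℝ))) •
                ((↑z⁻¹ : Matrix (Fin p) (Fin p) ℝ) * ι γ *
                  (↑z : Matrix (Fin p) (Fin p) ℝ)) - k) i j| < δ}.Finite ∧
        ({γ : A | γ ∈ E ∧ IsIntegral ℤ γ ∧ (ι γ).det = (m : ℝ) ∧
            ∃ k : Matrix (Fin p) (Fin p) ℝ, IsSO k ∧
              ∀ i j, |(((m : ℝ) ^ (-(1 : ℝ) / (p : ℝ))) •
                ((↑z⁻¹ : Matrix (Fin p) (Fin p) ℝ) * ι γ *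
                  (↑z : Matrix (Fin p) (Fin p) ℝ)) - k) i j| < δ}.ncard : ℝ) ≤
          C * (m.divisors.card : ℝ) ^ (p - 1) * (1 + δ) ^ (p - 1) := by
  obtain ⟨C, hC, hcount⟩ := stmt11_general p hp.ne_zero
  refine ⟨C, hC, fun A _ _ ι _ hcen _ E hcomm hE z δ hδ m hm ↦ ?_⟩
  have : Algebra.IsCentral ℚ A := ⟨hcen.le⟩
  refine hcount A ι E hcomm hE z δ hδ m (by lia) _ ?_
  rintro γ ⟨hγE, hint, hdet, k, hk, hclose⟩
  exact ⟨hγE, hint, hdet, k, (Matrix.mem_orthogonalGroup_iff' ..).2 hk.1, hclose⟩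
end

section
/- Let K be a number field of degree n over ℚ and let m be a positive integer. Then the number of nonzero ideals I of the ring of integers 𝒪_K with absolute norm N(I) = m is at most τ(m)^{n-1}. -/
/-!
Every rational prime has at most `n` primes of `R` above it, so the nonzero primes of `R` can be
labelled by `Fin n` in such a way that distinct primes with equal labels have coprime norms.
Grouping the prime factorization of an ideal of norm `m` by labels writes `m` as an ordered product
of `n` natural numbers. A product of powers of pairwise coprime norms determines the exponents, so
the ideal is recovered from these `n` factors; and the first factor is recovered from the others.
-/

open Finset Module IsDedekindDomain

theorem card_finMulAntidiag_le_card_divisors_pow (d m : ℕ) :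
    #(Nat.finMulAntidiag d m) ≤ #m.divisors ^ (d - 1) := by
  obtain _ | d := d
  · simpa using Finset.card_le_one_of_subsingleton (Nat.finMulAntidiag 0 m)
  calc #(Nat.finMulAntidiag (d + 1) m)
      ≤ #(Fintype.piFinset fun _ : Fin d ↦ m.divisors) := by
        refine Finset.card_le_card_of_injOn Fin.tail (fun f hf ↦ ?_) fun f hf g hg hfg ↦ ?_
        · simpa [Fin.tail] using fun i : Fin d ↦
            ⟨Nat.dvd_of_mem_finMulAntidiag hf i.succ, (Nat.mem_finMulAntidiag.mp hf).2⟩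
        · have tail_eq (i : Fin d) : f i.succ = g i.succ := congrFun hfg i
          have tail_ne_zero : ∏ i : Fin d, g i.succ ≠ 0 :=
            prod_ne_zero_iff.mpr fun i _ ↦ Nat.ne_zero_of_mem_finMulAntidiag hg i.succ
          have prod_eq : ∏ i, f i = ∏ i, g i :=
            (Nat.prod_eq_of_mem_finMulAntidiag hf).trans (Nat.prod_eq_of_mem_finMulAntidiag hg).symm
          simp only [Fin.prod_univ_succ, tail_eq] at prod_eq
          exact funext (Fin.cases (mul_right_cancel₀ tail_ne_zero prod_eq) tail_eq)
    _ = #m.divisors ^ (d + 1 - 1) := by simp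

section Multiset

variable {ι κ : Type*} [Fintype κ] [DecidableEq κ]

theorem sum_filter_label_eq (label : ι → κ) (s : Multiset ι) :
    ∑ j, s.filter (label · = j) = s := by
  classical
  ext a
  simp [Multiset.count_sum', Multiset.count_filter]

theorem prod_prod_map_filter_label {M : Type*} [CommMonoid M] (label : ι → κ) (w : ι → M)
    (s : Multiset ι) : ∏ j, ((s.filter (label · = j)).map w).prod = (s.map w).prod := by
  conv_rhs => rw [← sum_filter_label_eq label s]
  rw [← Multiset.coe_mapAddMonoidHom, map_sum, Multiset.prod_sum]

end Multiset

theorem multiset_eq_of_prod_map_eq {ι : Type*} {w : ι → ℕ} (hw : ∀ a, w a ≠ 1) {s t : Multiset ι}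
    (hcop : ∀ a ∈ s, ∀ b ∈ t, a ≠ b → (w a).Coprime (w b)) (hs : (s.map w).prod ≠ 0)
    (h : (s.map w).prod = (t.map w).prod) : s = t := by
  induction s using Multiset.induction_on generalizing t with
  | empty =>
    by_contra! ht
    obtain ⟨b, hb⟩ := Multiset.exists_mem_of_ne_zero ht.symm
    have : w b ∣ 1 := by simpa [← h] using Multiset.dvd_prod (Multiset.mem_map_of_mem w hb)
    exact hw b (Nat.dvd_one.mp this)
  | cons a s ih =>
    rw [Multiset.map_cons, Multiset.prod_cons] at h hs
    have ha : a ∈ t := by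
      by_contra hat
      have : (w a).Coprime (t.map w).prod := by
        rw [Nat.coprime_multiset_prod_right_iff]
        simpa using fun b hb ↦
          hcop a (Multiset.mem_cons_self a s) b hb (ne_of_mem_of_not_mem hb hat).symm
      exact hw a (this.eq_one_of_dvd (h ▸ dvd_mul_right _ _))
    obtain ⟨t, rfl⟩ := Multiset.exists_cons_of_mem ha
    rw [Multiset.map_cons, Multiset.prod_cons] at h
    rw [ih (fun b hb c hc ↦ hcop b (Multiset.mem_cons_of_mem hb) c (Multiset.mem_cons_of_mem hc))
      (right_ne_zero_of_mul hs) (mul_left_cancel₀ (left_ne_zero_of_mul hs) h)]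

theorem encard_multiset_prod_map_eq_le_card_finMulAntidiag {ι : Type*} {n : ℕ} {w : ι → ℕ}
    (hw : ∀ a, w a ≠ 1) (label : ι → Fin n)
    (hcop : ∀ a b, a ≠ b → label a = label b → (w a).Coprime (w b)) {m : ℕ} (hm : m ≠ 0) :
    {s : Multiset ι | (s.map w).prod = m}.encard ≤ #(Nat.finMulAntidiag n m) := by
  let labelProd (s : Multiset ι) (j : Fin n) : ℕ := ((s.filter (label · = j)).map w).prod
  have prod_labelProd (s : Multiset ι) : ∏ j, labelProd s j = (s.map w).prod :=
    prod_prod_map_filter_label label w s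
  rw [← Set.encard_coe_eq_coe_finsetCard]
  refine Set.encard_le_encard_of_injOn (f := labelProd) (fun s hs ↦ ?_) fun s hs t _ hst ↦ ?_
  · exact Nat.mem_finMulAntidiag.mpr ⟨(prod_labelProd s).trans hs, hm⟩
  · have filter_eq (j : Fin n) : s.filter (label · = j) = t.filter (label · = j) := by
      refine multiset_eq_of_prod_map_eq hw (fun a ha b hb hab ↦ ?_) ?_ (congrFun hst j)
      · exact hcop a b hab
          ((Multiset.mem_filter.mp ha).2.trans (Multiset.mem_filter.mp hb).2.symm)
      · exact prod_ne_zero_iff.mp ((prod_labelProd s).trans hs ▸ hm) j (mem_univ j)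
    rw [← sum_filter_label_eq label s, ← sum_filter_label_eq label t]
    exact sum_congr rfl fun j _ ↦ filter_eq j

section FiniteFlat

variable {R : Type*} (S : Type*) [CommRing R] [IsDomain R] [CommRing S] [Algebra R S]
  [Module.Finite R S] [Module.Flat R S]

theorem card_primesOver_le_finrank (p : Ideal R) [p.IsPrime] :
    Nat.card (p.primesOver S) ≤ finrank R S := by
  have := (Algebra.QuasiFinite.finite_primesOver (S := S) p).fintype
  rw [← p.sum_ramification_inertia_eq_finrank S, Nat.card_eq_fintype_card, Fintype.card_eq_sum_ones]
  refine sum_le_sum fun q _ ↦ ?_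
  have := q.2.1
  exact Nat.mul_pos (q.1.ramificationIdx_pos R) (q.1.inertiaDeg_pos R)

variable (R) in
theorem exists_fin_label_primeSpectrum :
    ∃ label : PrimeSpectrum S → Fin (finrank R S), ∀ P Q : PrimeSpectrum S,
      P.asIdeal.under R = Q.asIdeal.under R → label P = label Q → P = Q := by
  have exists_embedding (p : PrimeSpectrum R) :
      Nonempty (p.asIdeal.primesOver S ↪ Fin (finrank R S)) := by
    have := (Algebra.QuasiFinite.finite_primesOver (S := S) p.asIdeal).fintype
    apply Function.Embedding.nonempty_of_card_le
    rw [← Nat.card_eq_fintype_card, Fintype.card_fin]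
    exact card_primesOver_le_finrank S p.asIdeal
  let emb (p : PrimeSpectrum R) := (exists_embedding p).some
  let label (P : PrimeSpectrum S) : Fin (finrank R S) :=
    emb ⟨P.asIdeal.under R, inferInstance⟩ ⟨P.asIdeal, P.isPrime, ⟨rfl⟩⟩
  have label_eq (p : PrimeSpectrum R) (P : PrimeSpectrum S)
      (hP : P.asIdeal ∈ p.asIdeal.primesOver S) : label P = emb p ⟨P.asIdeal, hP⟩ := by
    obtain rfl : p = ⟨P.asIdeal.under R, inferInstance⟩ := PrimeSpectrum.ext hP.2.over
    rfl
  refine ⟨label, fun P Q hPQ hlabel ↦ ?_⟩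
  rw [label_eq ⟨Q.asIdeal.under R, inferInstance⟩ P ⟨P.isPrime, ⟨hPQ.symm⟩⟩] at hlabel
  exact PrimeSpectrum.ext (congrArg Subtype.val ((emb _).injective hlabel))

end FiniteFlat

theorem exists_multiset_heightOneSpectrum_prod_eq {R : Type*} [CommRing R] [IsDedekindDomain R]
    {I : Ideal R} (hI : I ≠ ⊥) :
    ∃ s : Multiset (HeightOneSpectrum R), (s.map HeightOneSpectrum.asIdeal).prod = I := by
  induction I using UniqueFactorizationMonoid.induction_on_prime with
  | h₁ => exact absurd rfl hI
  | h₂ I hunit => exact ⟨0, by simpa using (Ideal.isUnit_iff.mp hunit).symm⟩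
  | h₃ I P hI₀ hP ih =>
    obtain ⟨s, rfl⟩ := ih hI₀
    exact ⟨HeightOneSpectrum.ofPrime hP ::ₘ s, by simp⟩

section Norm

variable {R : Type*} [CommRing R] [IsDedekindDomain R] [Module.Free ℤ R] [Module.Finite ℤ R]

theorem coprime_absNorm_of_under_ne {P Q : HeightOneSpectrum R}
    (hPQ : P.asIdeal.under ℤ ≠ Q.asIdeal.under ℤ) :
    (Ideal.absNorm P.asIdeal).Coprime (Ideal.absNorm Q.asIdeal) := by
  have prime_absNorm_under (v : HeightOneSpectrum R) : (Ideal.absNorm (v.asIdeal.under ℤ)).Prime :=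
    have : NeZero v.asIdeal := ⟨v.ne_bot⟩
    Nat.absNorm_under_prime v.asIdeal
  rw [← Ideal.absNorm_pow_inertiaDeg (P.asIdeal.under ℤ) P.asIdeal,
    ← Ideal.absNorm_pow_inertiaDeg (Q.asIdeal.under ℤ) Q.asIdeal]
  refine Nat.Coprime.pow _ _ ?_
  rw [Nat.coprime_primes (prime_absNorm_under P) (prime_absNorm_under Q)]
  contrapose! hPQ
  rw [← Int.ideal_span_absNorm_eq_self (P.asIdeal.under ℤ), hPQ, Int.ideal_span_absNorm_eq_self]

variable (R) in
theorem exists_fin_label_coprime_absNorm :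
    ∃ label : HeightOneSpectrum R → Fin (finrank ℤ R), ∀ P Q, P ≠ Q → label P = label Q →
      (Ideal.absNorm P.asIdeal).Coprime (Ideal.absNorm Q.asIdeal) := by
  obtain ⟨label, hlabel⟩ := exists_fin_label_primeSpectrum ℤ R
  refine ⟨fun P ↦ label ⟨P.asIdeal, P.isPrime⟩, fun P Q hPQ hlabelPQ ↦ ?_⟩
  refine coprime_absNorm_of_under_ne fun hunder ↦ hPQ ?_
  exact HeightOneSpectrum.ext (congrArg PrimeSpectrum.asIdeal (hlabel _ _ hunder hlabelPQ))

variable (R) in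
theorem stmt12_general {m : ℕ} (hm : m ≠ 0) :
    {I : Ideal R | Ideal.absNorm I = m}.encard ≤ #(Nat.finMulAntidiag (finrank ℤ R) m) := by
  obtain ⟨label, hcop⟩ := exists_fin_label_coprime_absNorm R
  let primeNorm (P : HeightOneSpectrum R) : ℕ := Ideal.absNorm P.asIdeal
  have primeNorm_ne_one (P : HeightOneSpectrum R) : primeNorm P ≠ 1 :=
    mt Ideal.absNorm_eq_one_iff.mp P.isPrime.ne_top
  let idealProd (s : Multiset (HeightOneSpectrum R)) : Ideal R :=
    (s.map HeightOneSpectrum.asIdeal).prod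
  have subset_image : {I : Ideal R | Ideal.absNorm I = m} ⊆
      idealProd '' {s | (s.map primeNorm).prod = m} := by
    rintro I rfl
    obtain ⟨s, rfl⟩ :=
      exists_multiset_heightOneSpectrum_prod_eq (mt Ideal.absNorm_eq_zero_iff.mpr hm)
    exact ⟨s, by simp [primeNorm, map_multiset_prod], rfl⟩
  calc {I : Ideal R | Ideal.absNorm I = m}.encard
      ≤ (idealProd '' {s | (s.map primeNorm).prod = m}).encard := Set.encard_le_encard subset_image
    _ ≤ {s : Multiset (HeightOneSpectrum R) | (s.map primeNorm).prod = m}.encard :=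
      Set.encard_image_le ..
    _ ≤ #(Nat.finMulAntidiag (finrank ℤ R) m) :=
      encard_multiset_prod_map_eq_le_card_finMulAntidiag primeNorm_ne_one label hcop hm

end Norm

/-- In a number field `K` of degree `n` over `ℚ`, the number of nonzero
ideals of the ring of integers of absolute norm `m` is at most `τ(m)^(n-1)`. -/
theorem stmt12 (K : Type*) [Field K] [NumberField K] (n : ℕ)
    (hn : Module.finrank ℚ K = n) (m : ℕ) (hm : 0 < m) :
    {I : Ideal (NumberField.RingOfIntegers K) | I ≠ ⊥ ∧ Ideal.absNorm I = m}.Finite ∧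
      {I : Ideal (NumberField.RingOfIntegers K) | I ≠ ⊥ ∧ Ideal.absNorm I = m}.ncard ≤
        m.divisors.card ^ (n - 1) := by
  rw [← Set.encard_le_coe_iff_finite_ncard_le, ← hn, ← NumberField.RingOfIntegers.rank K]
  calc {I : Ideal (NumberField.RingOfIntegers K) | I ≠ ⊥ ∧ Ideal.absNorm I = m}.encard
      ≤ {I : Ideal (NumberField.RingOfIntegers K) | Ideal.absNorm I = m}.encard :=
        Set.encard_le_encard fun _ hI ↦ hI.2
    _ ≤ #(Nat.finMulAntidiag _ m) := stmt12_general _ hm.ne'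
    _ ≤ _ := mod_cast card_finMulAntidiag_le_card_divisors_pow _ m
end
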